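/- arXiv:2212.04904 — 2 statements merged into one kernel-verified Lean document; each statement's English description precedes it below -/
import Mathlib

section
/- Let W be a non-zero weight module for the extended Witt algebra 𝔏_{S,n} (n ≥ 1) with uniformly bounded weight spaces. Then W contains a non-zero irreducible 𝔏_{S,n}-submodule. Furthermore: (1) if 0 is not a weight of W, then W is infinite dimensional and contains a non-trivial irreducible 𝔏_{S,n}-submodule; (2) if 0 is a weight of W, then either W is a finite dimensional trivial 𝔏_{S,n}-module, or W is infinite dimensional and W/W_1 contains a non-trivial irreducible 𝔏_{S,n}-submodule, where W_1 is the maximal finite dimensional trivial 𝔏_{S,n}-submodule of W. -/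
open scoped TensorProduct

noncomputable section

namespace LoopWitt

/-- The standard pairing `(u | m)` between `ℂⁿ` and `ℤⁿ`. -/
def pairC {n : ℕ} (u : Fin n → ℂ) (m : Fin n → ℤ) : ℂ := ∑ i, u i * (m i : ℂ)

/-- The standard pairing on `ℂⁿ`. -/
def pairCC {n : ℕ} (u lam : Fin n → ℂ) : ℂ := ∑ i, u i * lam i

/-- `ℤⁿ = K ⊕ ℤβ`. -/
def IsDirectSumDecomp {n : ℕ} (K : AddSubgroup (Fin n → ℤ)) (β : Fin n → ℤ) : Prop :=
  (∀ m : Fin n → ℤ, ∃ a ∈ K, ∃ d : ℤ, m = a + d • β) ∧ ∀ d : ℤ, d • β ∈ K → d = 0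

/-- `r` lies in the positive part `K + ℕ₊ β` of `ℤⁿ`. -/
def posDeg {n : ℕ} (K : AddSubgroup (Fin n → ℤ)) (β : Fin n → ℤ) (r : Fin n → ℤ) : Prop :=
  ∃ a ∈ K, ∃ d : ℤ, 1 ≤ d ∧ r = a + d • β

/-- A representation of the loop Witt algebra `Wₙ ⊗ B`, given by operators
`D u r b` (for `D(u,r) ⊗ b`, where `D(u,r) = Σ uᵢ tʳ dᵢ`), bilinear in `u` and `b`,
subject to the Witt bracket relations. -/
structure WittRep (n : ℕ) (B : Type*) [CommRing B] [Algebra ℂ B]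
    (V : Type*) [AddCommGroup V] [Module ℂ V] where
  D : (Fin n → ℂ) → (Fin n → ℤ) → B → Module.End ℂ V
  D_add_u : ∀ u u' r b, D (u + u') r b = D u r b + D u' r b
  D_smul_u : ∀ (c : ℂ) u r b, D (c • u) r b = c • D u r b
  D_add_b : ∀ u r b b', D u r (b + b') = D u r b + D u r b'
  D_smul_b : ∀ (c : ℂ) u r b, D u r (c • b) = c • D u r b
  comm_DD : ∀ u r b v s b',
    ⁅D u r b, D v s b'⁆ = D (pairC u s • v - pairC v r • u) (r + s) (b * b')

namespace WittRep

variable {n : ℕ} {B : Type*} [CommRing B] [Algebra ℂ B]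
  {V : Type*} [AddCommGroup V] [Module ℂ V]

/-- The weight space of weight `lam` with respect to the Cartan subalgebra `H = ⊕ ℂ dᵢ`. -/
def weightSpace (ρ : WittRep n B V) (lam : Fin n → ℂ) : Submodule ℂ V where
  carrier := {x | ∀ u, ρ.D u 0 1 x = pairCC u lam • x}
  add_mem' := by
    intro a b ha hb u
    rw [map_add, ha u, hb u, smul_add]
  zero_mem' := by intro u; simp
  smul_mem' := by
    intro c a ha u
    rw [map_smul, ha u, smul_comm]

/-- A weight module: the sum of the weight spaces is everything. -/
def IsWeightModule (ρ : WittRep n B V) : Prop :=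
  (⨆ lam : Fin n → ℂ, ρ.weightSpace lam) = ⊤

/-- Uniformly bounded weight spaces. -/
def UniformlyBounded (ρ : WittRep n B V) : Prop :=
  ∃ N : ℕ, ∀ lam, Module.rank ℂ ↥(ρ.weightSpace lam) ≤ (N : Cardinal)

/-- A Harish-Chandra module: a weight module with finite dimensional weight spaces. -/
def HarishChandra (ρ : WittRep n B V) : Prop :=
  ρ.IsWeightModule ∧ ∀ lam, FiniteDimensional ℂ ↥(ρ.weightSpace lam)

/-- A submodule invariant under all the operators. -/
def Invariant (ρ : WittRep n B V) (U : Submodule ℂ V) : Prop :=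
  ∀ u r b, ∀ x ∈ U, ρ.D u r b x ∈ U

/-- Irreducibility. -/
def IsIrreducible (ρ : WittRep n B V) : Prop :=
  (∃ x : V, x ≠ 0) ∧ ∀ U : Submodule ℂ V, ρ.Invariant U → U = ⊥ ∨ U = ⊤

/-- A single point evaluation module. -/
def IsSinglePointEval (ρ : WittRep n B V) : Prop :=
  ∃ η : B →ₐ[ℂ] ℂ, ∀ u r b, ρ.D u r b = η b • ρ.D u r 1

/-- Nontriviality of the action. -/
def IsNontrivial (ρ : WittRep n B V) : Prop := ∃ u r b x, ρ.D u r b x ≠ 0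

/-- `z` is a highest weight vector generating the module, with respect to the
triangular decomposition determined by `ℤⁿ = K ⊕ ℤβ`. -/
def IsHWVector (ρ : WittRep n B V) (K : AddSubgroup (Fin n → ℤ)) (β : Fin n → ℤ)
    (z : V) : Prop :=
  z ≠ 0 ∧ (∃ lam, z ∈ ρ.weightSpace lam) ∧
  (∀ u r b, posDeg K β r → ρ.D u r b z = 0) ∧
  ∀ U : Submodule ℂ V, ρ.Invariant U → z ∈ U → U = ⊤

/-- A highest weight module. -/
def IsHighestWeight (ρ : WittRep n B V) : Prop :=
  ∃ (K : AddSubgroup (Fin n → ℤ)) (β : Fin n → ℤ),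
    IsDirectSumDecomp K β ∧ ∃ z, ρ.IsHWVector K β z

end WittRep

/-- A representation of the loop extended Witt algebra `𝔏_{S,n}(B) = (Wₙ ⋉ (S ⊗ Aₙ)) ⊗ B`,
given by operators `D u r b` (for `D(u,r) ⊗ b`) and `E s m b` (for `s ⊗ tᵐ ⊗ b`),
suitably multilinear, subject to the bracket relations of `𝔏_{S,n}(B)`. -/
structure ExtWittRep (n : ℕ) (S : Type*) [AddCommGroup S] [Module ℂ S]
    (B : Type*) [CommRing B] [Algebra ℂ B]
    (V : Type*) [AddCommGroup V] [Module ℂ V] where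
  D : (Fin n → ℂ) → (Fin n → ℤ) → B → Module.End ℂ V
  E : S → (Fin n → ℤ) → B → Module.End ℂ V
  D_add_u : ∀ u u' r b, D (u + u') r b = D u r b + D u' r b
  D_smul_u : ∀ (c : ℂ) u r b, D (c • u) r b = c • D u r b
  D_add_b : ∀ u r b b', D u r (b + b') = D u r b + D u r b'
  D_smul_b : ∀ (c : ℂ) u r b, D u r (c • b) = c • D u r b
  E_add_s : ∀ s s' m b, E (s + s') m b = E s m b + E s' m b
  E_smul_s : ∀ (c : ℂ) s m b, E (c • s) m b = c • E s m b
  E_add_b : ∀ s m b b', E s m (b + b') = E s m b + E s m b'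
  E_smul_b : ∀ (c : ℂ) s m b, E s m (c • b) = c • E s m b
  comm_DD : ∀ u r b v s b',
    ⁅D u r b, D v s b'⁆ = D (pairC u s • v - pairC v r • u) (r + s) (b * b')
  comm_DE : ∀ u r b s m b', ⁅D u r b, E s m b'⁆ = pairC u m • E s (m + r) (b * b')
  comm_EE : ∀ s m b s' m' b', ⁅E s m b, E s' m' b'⁆ = 0

namespace ExtWittRep

variable {n : ℕ} {S : Type*} [AddCommGroup S] [Module ℂ S]
  {B : Type*} [CommRing B] [Algebra ℂ B]
  {V : Type*} [AddCommGroup V] [Module ℂ V]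

/-- The weight space of the weight given by `lam` on `H` and the linear functional `c`
on `S ≅ S ⊗ t⁰ (⊗ 1)`, with respect to the Cartan subalgebra `H ⊕ (S ⊗ t⁰) (⊗ 1)`. -/
def weightSpace (ρ : ExtWittRep n S B V) (lam : Fin n → ℂ) (c : S →ₗ[ℂ] ℂ) :
    Submodule ℂ V where
  carrier := {x | (∀ u, ρ.D u 0 1 x = pairCC u lam • x) ∧ ∀ s, ρ.E s 0 1 x = c s • x}
  add_mem' := by
    intro a b ha hb
    refine ⟨fun u => ?_, fun s => ?_⟩
    · rw [map_add, ha.1 u, hb.1 u, smul_add]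
    · rw [map_add, ha.2 s, hb.2 s, smul_add]
  zero_mem' := by exact ⟨fun u => by simp, fun s => by simp⟩
  smul_mem' := by
    intro t a ha
    refine ⟨fun u => ?_, fun s => ?_⟩
    · rw [map_smul, ha.1 u, smul_comm]
    · rw [map_smul, ha.2 s, smul_comm]

/-- A weight module: the weight spaces span. -/
def IsWeightModule (ρ : ExtWittRep n S B V) : Prop :=
  (⨆ p : (Fin n → ℂ) × (S →ₗ[ℂ] ℂ), ρ.weightSpace p.1 p.2) = ⊤

/-- Uniformly bounded weight spaces. -/
def UniformlyBounded (ρ : ExtWittRep n S B V) : Prop :=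
  ∃ N : ℕ, ∀ lam c, Module.rank ℂ ↥(ρ.weightSpace lam c) ≤ (N : Cardinal)

/-- Harish-Chandra: a weight module with finite dimensional weight spaces. -/
def HarishChandra (ρ : ExtWittRep n S B V) : Prop :=
  ρ.IsWeightModule ∧ ∀ lam c, FiniteDimensional ℂ ↥(ρ.weightSpace lam c)

/-- Invariant submodule. -/
def Invariant (ρ : ExtWittRep n S B V) (U : Submodule ℂ V) : Prop :=
  (∀ u r b, ∀ x ∈ U, ρ.D u r b x ∈ U) ∧ (∀ s m b, ∀ x ∈ U, ρ.E s m b x ∈ U)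

/-- Irreducibility. -/
def IsIrreducible (ρ : ExtWittRep n S B V) : Prop :=
  (∃ x : V, x ≠ 0) ∧ ∀ U : Submodule ℂ V, ρ.Invariant U → U = ⊥ ∨ U = ⊤

/-- A single point evaluation module. -/
def IsSinglePointEval (ρ : ExtWittRep n S B V) : Prop :=
  ∃ η : B →ₐ[ℂ] ℂ, (∀ u r b, ρ.D u r b = η b • ρ.D u r 1) ∧
    ∀ s m b, ρ.E s m b = η b • ρ.E s m 1

/-- Single point generalised evaluation module: the action factors through
`𝔤 ⊗ B/𝔪ᵏ` for some maximal ideal `𝔪` and some `k`. -/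
def IsGenEval (ρ : ExtWittRep n S B V) : Prop :=
  ∃ 𝔪 : Ideal B, 𝔪.IsMaximal ∧ ∃ k : ℕ, ∀ b ∈ 𝔪 ^ k,
    (∀ u r, ρ.D u r b = 0) ∧ ∀ s m, ρ.E s m b = 0

/-- Nontriviality of the action. -/
def IsNontrivial (ρ : ExtWittRep n S B V) : Prop :=
  (∃ u r b x, ρ.D u r b x ≠ 0) ∨ ∃ s m b x, ρ.E s m b x ≠ 0

/-- The submodule of vectors on which the whole Lie algebra acts trivially. -/
def trivVectors (ρ : ExtWittRep n S B V) : Submodule ℂ V where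
  carrier := {x | (∀ u r b, ρ.D u r b x = 0) ∧ ∀ s m b, ρ.E s m b x = 0}
  add_mem' := by
    intro a b ha hb
    exact ⟨fun u r c => by rw [map_add, ha.1 u r c, hb.1 u r c, add_zero],
      fun s m c => by rw [map_add, ha.2 s m c, hb.2 s m c, add_zero]⟩
  zero_mem' := ⟨fun u r c => by simp, fun s m c => by simp⟩
  smul_mem' := by
    intro t a ha
    exact ⟨fun u r c => by rw [map_smul, ha.1 u r c, smul_zero],
      fun s m c => by rw [map_smul, ha.2 s m c, smul_zero]⟩

/-- Highest weight vector for the triangular decomposition determined by `ℤⁿ = K ⊕ ℤβ`,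
generating the whole module. -/
def IsHWVector (ρ : ExtWittRep n S B V) (K : AddSubgroup (Fin n → ℤ)) (β : Fin n → ℤ)
    (z : V) : Prop :=
  z ≠ 0 ∧ (∃ lam c, z ∈ ρ.weightSpace lam c) ∧
  (∀ u r b, posDeg K β r → ρ.D u r b z = 0) ∧
  (∀ s m b, posDeg K β m → ρ.E s m b z = 0) ∧
  ∀ U : Submodule ℂ V, ρ.Invariant U → z ∈ U → U = ⊤

/-- Highest weight module. -/
def IsHighestWeight (ρ : ExtWittRep n S B V) : Prop :=
  ∃ (K : AddSubgroup (Fin n → ℤ)) (β : Fin n → ℤ),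
    IsDirectSumDecomp K β ∧ ∃ z, ρ.IsHWVector K β z

/-- Invariance under the degree-`K` part `(𝔏_{S,n}(B))_K`. -/
def InvariantK (ρ : ExtWittRep n S B V) (K : AddSubgroup (Fin n → ℤ))
    (U : Submodule ℂ V) : Prop :=
  (∀ u, ∀ r ∈ K, ∀ b, ∀ x ∈ U, ρ.D u r b x ∈ U) ∧
    ∀ s, ∀ m ∈ K, ∀ b, ∀ x ∈ U, ρ.E s m b x ∈ U

/-- The highest weight space: the `(𝔏_{S,n}(B))_K`-submodule generated by `z`. -/
def hwSpace (ρ : ExtWittRep n S B V) (K : AddSubgroup (Fin n → ℤ)) (z : V) :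
    Submodule ℂ V :=
  sInf {U : Submodule ℂ V | z ∈ U ∧ ρ.InvariantK K U}

end ExtWittRep

end LoopWitt

open LoopWitt

/-! The algebra `𝔏_{S,n}` is the generalised Witt algebra `(ℂⁿ × S) ⊗ ℂ[ℤⁿ]` of the pairing of `ℤⁿ`
with `ℂⁿ × S` that is zero on `S`, so that the operators `s ⊗ tᵐ` need no treatment of their own.

For a vector `v` killed by all `L k`, `k > d`, of a Witt algebra of rank one, the vectors
`L a (L (s - a) v)` span a space whose dimension is unbounded as `s → -∞` unless `L d v = 0`. Hence,
when weight spaces are bounded, a weight vector killed in all degrees `k r`, `k ≥ 1`, is killed in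
all degrees `k r`, `k ∈ ℤ`. If moreover `r ≠ 0` and `x` is killed in the degrees `r + e` for `e` in
a symmetric finite set of generators of `ℤⁿ` containing `0`, then commutators show that `x` is
killed in all degrees.

So the submodule generated by a weight vector that is not trivial contains a non-zero weight vector
in every translate of this finite set inside its coset of weights. Choosing a translate that avoids
the weight zero, one obtains a single finite dimensional space that every non-trivial submodule
supported on a given coset of weights meets non-trivially. Therefore there is a minimal non-trivial
submodule, and modulo the trivial vectors it is irreducible. -/

namespace LoopWitt

section LinearAlgebra

variable {K V M ι : Type*} [Field K] [AddCommGroup V] [Module K V] [AddCommGroup M] [Module K M]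

lemma eq_zero_of_forall_dual_ne_zero {ξ : Module.Dual K V} (hξ : ξ ≠ 0) {f : V →ₗ[K] M}
    (hf : ∀ a, ξ a ≠ 0 → f a = 0) : f = 0 := by
  obtain ⟨b, hb⟩ := DFunLike.ne_iff.1 hξ
  rw [LinearMap.zero_apply] at hb
  ext a
  by_cases ha : ξ a = 0
  · have hab := hf (a + b) (by rwa [map_add, ha, zero_add])
    rwa [map_add, hf b hb, add_zero] at hab
  · exact hf a ha

lemma linearIndependent_of_apply_eq_ite [DecidableEq ι] {T : ι → V →ₗ[K] M} {w : ι → V} {z : M}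
    (hz : z ≠ 0) (hT : ∀ i j, T i (w j) = if i = j then z else 0) : LinearIndependent K w := by
  have hpi : LinearMap.pi T ∘ w = fun j => Pi.single j z := by
    ext j i
    simp [hT, Pi.single_apply]
  exact .of_comp (LinearMap.pi T) (hpi ▸ Pi.linearIndependent_single_of_ne_zero fun _ => hz)

lemma mem_of_sum_mem_of_separating (U : Submodule K V) (t : Finset ι) (x : ι → V)
    (h : ∀ i ∈ t, ∀ j ∈ t, i ≠ j → ∃ (T : Module.End K V) (χ : ι → K),
      U ∈ T.invtSubmodule ∧ (∀ k ∈ t, T (x k) = χ k • x k) ∧ χ i ≠ χ j)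
    (hx : ∑ i ∈ t, x i ∈ U) : ∀ i ∈ t, x i ∈ U := by
  classical
  induction t using Finset.induction_on generalizing x with
  | empty => simp
  | insert j t hj ih =>
    have hmem : ∀ i ∈ t, x i ∈ U := by
      intro i hi
      have hij : i ≠ j := ne_of_mem_of_not_mem hi hj
      obtain ⟨T, χ, hTU, hT, hχ⟩ := h i (by simp [hi]) j (by simp) hij
      have hsum : ∑ k ∈ t, (χ k - χ j) • x k ∈ U := by
        have hcalc : ∑ k ∈ t, (χ k - χ j) • x k =
            T (∑ k ∈ insert j t, x k) - χ j • ∑ k ∈ insert j t, x k := by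
          rw [map_sum, Finset.sum_congr rfl hT, Finset.smul_sum, ← Finset.sum_sub_distrib,
            Finset.sum_insert hj, sub_self, zero_add]
          simp only [sub_smul]
        rw [hcalc]
        exact U.sub_mem (hTU hx) (U.smul_mem _ hx)
      have hsmul := ih (fun k => (χ k - χ j) • x k) (fun a ha b hb hab => by
        obtain ⟨T', χ', hTU', hT', hχ'⟩ := h a (by simp [ha]) b (by simp [hb]) hab
        exact ⟨T', χ', hTU', fun k hk => by
          rw [map_smul, hT' k (by simp [hk]), smul_comm], hχ'⟩) hsum i hi
      exact (U.smul_mem_iff (sub_ne_zero.2 hχ)).1 hsmul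
    rw [Finset.sum_insert hj] at hx
    exact (Finset.forall_mem_insert _ _ _).2 ⟨(U.add_mem_iff_left (U.sum_mem hmem)).1 hx, hmem⟩

lemma exists_minimal_not_le {P : Submodule K V → Prop} (hP : ∀ A : Set (Submodule K V),
      (∀ U ∈ A, P U) → P (sInf A)) (F T : Submodule K V) [FiniteDimensional K F]
    {U₀ : Submodule K V} (hPU₀ : P U₀) (hU₀ : ¬ U₀ ≤ T)
    (hF : ∀ U ≤ U₀, P U → ¬ U ≤ T → ¬ U ⊓ F ≤ T) :
    ∃ U, Minimal (fun U => P U ∧ ¬ U ≤ T) U := by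
  -- If `U₁ ⊓ F` is minimal, then every admissible `U ≤ U₁` has the same trace on `F` as `U₁`, so
  -- the infimum of all such `U` is still not contained in `T`.
  obtain ⟨U₁, ⟨hU₁, hPU₁, hTU₁⟩, hmin⟩ := exists_minimalFor_of_wellFoundedLT
    (fun U => U ≤ U₀ ∧ P U ∧ ¬ U ≤ T) (fun U => U.comap F.subtype) ⟨U₀, le_rfl, hPU₀, hU₀⟩
  set A := {U | U ≤ U₁ ∧ P U ∧ ¬ U ≤ T}
  have hA : U₁ ⊓ F ≤ sInf A := le_sInf fun U hU x hx =>
    hmin ⟨hU.1.trans hU₁, hU.2⟩ (fun _ hy => hU.1 hy) (show (⟨x, hx.2⟩ : F) ∈ _ from hx.1)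
  refine ⟨sInf A, ⟨hP A fun U hU => hU.2.1, fun h => hF U₁ hU₁ hPU₁ hTU₁ (hA.trans h)⟩, ?_⟩
  intro U hU hUA
  exact sInf_le ⟨hUA.trans (sInf_le ⟨le_rfl, hPU₁, hTU₁⟩), hU⟩

end LinearAlgebra

lemma eq_or_eq_sup_of_minimal {α : Type*} [Lattice α] [IsModularLattice α] {P : α → Prop}
    (hP : ∀ a b, P a → P b → P (a ⊓ b)) {t u a : α} (hu : Minimal (fun a => P a ∧ ¬ a ≤ t) u)
    (ha : P a) (hta : t ≤ a) (hat : a ≤ t ⊔ u) : a = t ∨ a = t ⊔ u := by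
  by_cases h : a ⊓ u ≤ t
  · left
    calc a = (t ⊔ u) ⊓ a := (inf_eq_right.2 hat).symm
      _ = t ⊔ u ⊓ a := sup_inf_assoc_of_le u hta
      _ = t := sup_eq_left.2 (inf_comm a u ▸ h)
  · exact .inr (hat.antisymm (sup_le hta ((hu.le_of_le ⟨hP a u ha hu.prop.1, h⟩ inf_le_right).trans
      inf_le_left)))

section AddCommGroup

variable {Γ : Type*} [AddCommGroup Γ]

lemma exists_finset_symm_closure_eq_top [AddGroup.FG Γ] : ∃ B : Finset Γ,
    0 ∈ B ∧ (∀ e ∈ B, -e ∈ B) ∧ AddSubgroup.closure (B : Set Γ) = ⊤ := by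
  classical
  obtain ⟨S, hS⟩ := AddGroup.fg_def.1 ‹AddGroup.FG Γ›
  refine ⟨{0} ∪ (S ∪ S.image (-·)), by simp, fun e he => ?_, top_unique ?_⟩
  · obtain rfl | he | ⟨s, hs, rfl⟩ : e = 0 ∨ e ∈ S ∨ ∃ s ∈ S, -s = e := by simpa using he
    · simp
    · simp [he]
    · simp [hs]
  · exact hS ▸ AddSubgroup.closure_mono fun x hx => by simpa using Or.inr (Or.inl hx)

open scoped Pointwise in
lemma exists_forall_add_notMem [Nontrivial Γ] [IsAddTorsionFree Γ] (B Z : Finset Γ) :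
    ∃ t, ∀ e ∈ B, t + e ∉ Z := by
  classical
  obtain ⟨r, hr⟩ := exists_ne (0 : Γ)
  have : Infinite Γ := .of_injective (fun k : ℤ => k • r) (smul_left_injective ℤ hr)
  obtain ⟨t, ht⟩ := Infinite.exists_notMem_finset (Z - B)
  exact ⟨t, fun e he hZ => ht (by simpa using Finset.sub_mem_sub hZ he)⟩

variable [IsAddTorsionFree Γ] {P B : Set Γ} {r : Γ}

lemma zsmul_mem_of_forall_add_mem (hP : ∀ a ∈ P, ∀ b ∈ P, a ≠ b → a + b ∈ P) (h0 : 0 ∈ B)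
    (hneg : ∀ e ∈ B, -e ∈ B) (hB : AddSubgroup.closure B = ⊤) (hr : r ≠ 0)
    (hrB : ∀ e ∈ B, r + e ∈ P) {k : ℤ} (hk : 1 ≤ k) : k • r ∈ P := by
  have hr1 : r ∈ P := by simpa using hrB 0 h0
  induction k, hk using Int.leInduction with
  | base => simpa
  | succ k hk ih =>
    rcases hk.eq_or_lt with rfl | hk
    · obtain ⟨e, he, he0⟩ : ∃ e ∈ B, e ≠ 0 := by
        by_contra! h
        have hle : AddSubgroup.closure B ≤ ⊥ := (AddSubgroup.closure_le _).2 h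
        exact hr (hle (hB ▸ AddSubgroup.mem_top r))
      have hne : r + e ≠ r + -e := fun h => he0 (self_eq_neg.1 (add_left_cancel h))
      convert hP _ (hrB e he) _ (hrB _ (hneg e he)) hne using 1
      abel
    · rw [add_one_zsmul]
      refine hP _ ih _ hr1 fun h => hk.ne' ?_
      exact smul_left_injective ℤ hr (h.trans (one_zsmul r).symm)

lemma mem_and_add_self_mem_of_zsmul_mem (hP : ∀ a ∈ P, ∀ b ∈ P, a ≠ b → a + b ∈ P) (hr : r ≠ 0)
    (hrP : ∀ k : ℤ, k • r ∈ P) {e : Γ} (hre : r + e ∈ P) : e ∈ P ∧ e + e ∈ P := by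
  by_cases hez : e ∈ AddSubgroup.zmultiples r
  · obtain ⟨k, rfl⟩ := AddSubgroup.mem_zmultiples_iff.1 hez
    exact ⟨hrP k, add_zsmul r k k ▸ hrP (k + k)⟩
  have hne (k : ℤ) : k • r ≠ e := fun h => hez (AddSubgroup.mem_zmultiples_iff.2 ⟨k, h⟩)
  have heP : e ∈ P := by
    convert hP _ hre _ (hrP (-1)) (fun h => hne (-2) ?_) using 1
    · module
    · rw [← sub_eq_zero] at h ⊢
      rw [← neg_eq_zero, ← h]
      module
  have hsub : e + (-1 : ℤ) • r ∈ P := hP _ heP _ (hrP (-1)) (hne (-1)).symm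
  refine ⟨heP, ?_⟩
  convert hP _ hre _ hsub (fun h => hr (self_eq_neg.1 ?_)) using 1
  · module
  · exact add_left_cancel (by rw [add_comm, h, neg_one_zsmul])

lemma eq_univ_of_zsmul_mem (hP : ∀ a ∈ P, ∀ b ∈ P, a ≠ b → a + b ∈ P)
    (hneg : ∀ e ∈ B, -e ∈ B) (hB : AddSubgroup.closure B = ⊤) (hr : r ≠ 0)
    (hrB : ∀ e ∈ B, r + e ∈ P) (hrP : ∀ k : ℤ, k • r ∈ P) : P = Set.univ := by
  have hadd : ∀ m ∈ P, ∀ e ∈ B, m + e ∈ P := by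
    intro m hm e he
    obtain ⟨heP, heeP⟩ := mem_and_add_self_mem_of_zsmul_mem hP hr hrP (hrB e he)
    by_cases hme : m = e
    · exact hme ▸ heeP
    · exact hP m hm e heP hme
  refine Set.eq_univ_of_forall fun m => ?_
  refine AddSubgroup.closure_induction_right (p := fun x _ => x ∈ P) ?_ ?_ ?_
    (hB ▸ AddSubgroup.mem_top m : m ∈ AddSubgroup.closure B)
  · simpa using hrP 0
  · exact fun x _ e he hx => hadd x hx e he
  · exact fun x _ e he hx => hadd x hx (-e) (hneg e he)

end AddCommGroup

section Witt

variable {K V : Type*} [Field K] [AddCommGroup V] [Module K V]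

/-- The operators `L k` define a representation of the Witt algebra of rank one, `L k` being the
action of `t ^ k d`. -/
def IsWittAction (L : ℤ → Module.End K V) : Prop :=
  ∀ m k, ⁅L m, L k⁆ = ((k : K) - m) • L (m + k)

/-- The third difference at `c`, up to sign, of the sequence `a ↦ L (-a) (L (a - s) v)`. It is
used to detect linear independence: applying `L (s + d - p) ∘ L p` to this sequence gives a multiple
of `L d v` whose coefficient is a polynomial in `a` of degree two for `a < p` and of degree three
for `p < a`. -/
def thirdDiff (L : ℤ → Module.End K V) (v : V) (s c : ℤ) : V :=
  L (-c) (L (c - s) v) - (3 : K) • L (-(c + 1)) (L (c + 1 - s) v)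
    + (3 : K) • L (-(c + 2)) (L (c + 2 - s) v) - L (-(c + 3)) (L (c + 3 - s) v)

namespace IsWittAction

variable {L : ℤ → Module.End K V} {v : V} {d : ℤ}

lemma apply_apply (hL : IsWittAction L) (m k : ℤ) (x : V) :
    L m (L k x) = L k (L m x) + ((k : K) - m) • L (m + k) x := by
  rw [← LinearMap.smul_apply, ← hL m k, Ring.lie_def]
  simp

lemma apply_apply_of_lt (hL : IsWittAction L) (hd : d ≤ 0) (hv : ∀ k, d < k → L k v = 0)
    {s a p : ℤ} (hap : a < p) (hsap : s < a + p) (hps : p < s) :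
    L (s + d - p) (L p (L (-a) (L (a - s) v))) =
      (-((a : K) + p) * (s + p - 2 * a) * (2 * s + d - 2 * p)) • L d v := by
  rw [hL.apply_apply p (-a), hL.apply_apply p (a - s) v, hv p (by lia),
    hv (p + (a - s)) (by lia), hL.apply_apply (p + -a) (a - s) v, hv (p + -a) (by lia)]
  simp only [map_zero, smul_zero, zero_add, map_smul]
  rw [hL.apply_apply (s + d - p) _ v, hv (s + d - p) (by lia),
    show s + d - p + (p + -a + (a - s)) = d by ring]
  simp only [map_zero, zero_add]
  push_cast
  module

lemma apply_apply_of_gt (hL : IsWittAction L) (hd : d ≤ 0) (hv : ∀ k, d < k → L k v = 0)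
    {s a p : ℤ} (hpa : p < a) (hsap : s < a + p) (has : a < s) :
    L (s + d - p) (L p (L (-a) (L (a - s) v))) =
      (-((a : K) + p) * (a + s + d - 2 * p) * (2 * s + d - 2 * a)) • L d v := by
  rw [hL.apply_apply p (-a), hL.apply_apply p (a - s) v, hv p (by lia),
    hv (p + (a - s)) (by lia)]
  simp only [map_zero, smul_zero, zero_add, map_smul]
  rw [hL.apply_apply (s + d - p) (p + -a), hL.apply_apply (s + d - p) (a - s) v,
    hv (s + d - p) (by lia), hv (s + d - p + (a - s)) (by lia),
    hL.apply_apply (s + d - p + (p + -a)) (a - s) v, hv (s + d - p + (p + -a)) (by lia),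
    show s + d - p + (p + -a) + (a - s) = d by ring]
  simp only [map_zero, smul_zero, zero_add]
  push_cast
  module

lemma apply_apply_thirdDiff_of_lt (hL : IsWittAction L) (hd : d ≤ 0) (hv : ∀ k, d < k → L k v = 0)
    {s c p : ℤ} (hcp : c + 3 < p) (hsc : s < c + p) (hps : p < s) :
    L (s + d - p) (L p (thirdDiff L v s c)) = 0 := by
  simp only [thirdDiff, map_sub, map_add, map_smul]
  rw [hL.apply_apply_of_lt hd hv, hL.apply_apply_of_lt hd hv, hL.apply_apply_of_lt hd hv,
    hL.apply_apply_of_lt hd hv] <;> try lia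
  push_cast
  module

lemma apply_apply_thirdDiff_of_gt (hL : IsWittAction L) (hd : d ≤ 0) (hv : ∀ k, d < k → L k v = 0)
    {s c p : ℤ} (hpc : p < c) (hsc : s < c + p) (hcs : c + 3 < s) :
    L (s + d - p) (L p (thirdDiff L v s c)) = (-12 : K) • L d v := by
  simp only [thirdDiff, map_sub, map_add, map_smul]
  rw [hL.apply_apply_of_gt hd hv, hL.apply_apply_of_gt hd hv, hL.apply_apply_of_gt hd hv,
    hL.apply_apply_of_gt hd hv] <;> try lia
  push_cast
  module

variable [CharZero K]

lemma linearIndependent_thirdDiff (hL : IsWittAction L) (hd : d ≤ 0) (hv : ∀ k, d < k → L k v = 0)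
    (hne : L d v ≠ 0) (m : ℕ) : LinearIndependent K
      fun j : Fin m => thirdDiff L v (10 * m + 2) (5 * m + 2 + 5 * j) := by
  -- The intervals `[c, c + 3]` for `c = 5 * m + 2 + 5 * j` and the points `p = 5 * m + 1 + 5 * i`
  -- interlace within `[s / 2, s)`.
  set s : ℤ := 10 * m + 2
  let Y (i : ℕ) : Module.End K V := L (s + d - (5 * m + 1 + 5 * i)) * L (5 * m + 1 + 5 * i)
  have hY (i : ℕ) (hi : i ≤ m) (j : Fin m) : Y i (thirdDiff L v s (5 * m + 2 + 5 * j)) =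
      if i ≤ j then (-12 : K) • L d v else 0 := by
    have hj := j.2
    split_ifs
    · exact hL.apply_apply_thirdDiff_of_gt hd hv (by lia) (by lia) (by lia)
    · exact hL.apply_apply_thirdDiff_of_lt hd hv (by lia) (by lia) (by lia)
  refine linearIndependent_of_apply_eq_ite (T := fun i : Fin m => Y i - Y (i + 1))
    (smul_ne_zero (by norm_num : (-12 : K) ≠ 0) hne) fun i j => ?_
  rw [LinearMap.sub_apply, hY _ (by lia), hY _ (by lia)]
  rcases lt_trichotomy i j with h | rfl | h
  · simp [h.le, h.ne, Nat.succ_le_of_lt h]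
  · simp
  · simp [h.not_ge, h.ne', (Nat.lt_succ_of_lt h).not_ge]

lemma apply_eq_zero_of_rank_le (hL : IsWittAction L) (hd : d ≤ 0) (hv : ∀ k, d < k → L k v = 0)
    {N : ℕ} (hN : ∀ s : ℤ,
      Module.rank K (Submodule.span K (Set.range fun a => L a (L (s - a) v))) ≤ N) :
    L d v = 0 := by
  by_contra hne
  set s : ℤ := 10 * (N + 1 : ℕ) + 2
  set X := Submodule.span K (Set.range fun a => L a (L (-s - a) v))
  have hX (a : ℤ) : L (-a) (L (a - s) v) ∈ X :=
    Submodule.subset_span ⟨-a, by simp only [sub_neg_eq_add, neg_add_eq_sub]⟩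
  have hdiff (c : ℤ) : thirdDiff L v s c ∈ X :=
    X.sub_mem (X.add_mem (X.sub_mem (hX _) (X.smul_mem _ (hX _))) (X.smul_mem _ (hX _))) (hX _)
  have hli : LinearIndependent K fun j : Fin (N + 1) =>
      (⟨thirdDiff L v s (5 * (N + 1 : ℕ) + 2 + 5 * j), hdiff _⟩ : X) :=
    .of_comp X.subtype (hL.linearIndependent_thirdDiff hd hv hne (N + 1))
  have hle := hli.cardinal_lift_le_rank.trans (Cardinal.lift_le.2 (hN (-s)))
  simp only [Cardinal.mk_fin, Cardinal.lift_natCast, Nat.cast_le] at hle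
  lia

lemma apply_eq_zero_of_forall_pos (hL : IsWittAction L) {N : ℕ} (hN : ∀ s : ℤ,
      Module.rank K (Submodule.span K (Set.range fun a => L a (L (s - a) v))) ≤ N)
    (hpos : ∀ k, 0 < k → L k v = 0) (k : ℤ) : L k v = 0 := by
  have hlt (n : ℕ) : ∀ k : ℤ, -n < k → L k v = 0 := by
    induction n with
    | zero => simpa using hpos
    | succ n ih =>
      intro k hk
      rcases (show -(n : ℤ) ≤ k by lia).eq_or_lt with rfl | hk
      · exact hL.apply_eq_zero_of_rank_le (by lia) ih hN
      · exact ih k hk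
  exact hlt (k.natAbs + 1) k (by lia)

end IsWittAction

end Witt

section GenWittRep

variable {K T V Γ : Type*} [Field K] [AddCommGroup T] [Module K T] [AddCommGroup V] [Module K V]
  [AddCommGroup Γ]

/-- A representation on `V` of the generalised Witt algebra `T ⊗ K[Γ]` of the pairing
`φ : Γ → T*`, given by the operators `X r a` of the elements `a t ^ r`. The pairing may be
degenerate in `T`: the elements `a t ^ r` with `a` orthogonal to `Γ` span an abelian ideal. -/
structure GenWittRep (φ : Γ →+ Module.Dual K T) (V : Type*) [AddCommGroup V] [Module K V] where
  X : Γ → T →ₗ[K] Module.End K V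
  lie_X : ∀ r a s b, ⁅X r a, X s b⁆ = X (r + s) (φ s a • b - φ r b • a)

namespace GenWittRep

variable {φ : Γ →+ Module.Dual K T} (π : GenWittRep φ V)

/-- The weight space of weight `μ` with respect to the degree zero part `T` of the algebra. -/
def weightSpace (μ : Module.Dual K T) : Submodule K V := ⨅ a, (π.X 0 a).eigenspace (μ a)

/-- Submodules stable under the action. -/
def Invariant (U : Submodule K V) : Prop := ∀ r a, U ∈ (π.X r a).invtSubmodule

/-- The largest submodule on which the algebra acts by zero. -/
def trivVectors : Submodule K V := ⨅ r, ⨅ a, LinearMap.ker (π.X r a)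

/-- The degrees `r` such that all `X r a` kill `x`. -/
def annDegrees (x : V) : Set Γ := {r | ∀ a, π.X r a x = 0}

/-- The dimensions of the weight spaces are bounded along the coset `μ + Γ`. -/
def CosetBounded (μ : Module.Dual K T) : Prop :=
  ∃ N : ℕ, ∀ r, Module.rank K (π.weightSpace (μ + φ r)) ≤ N

/-- The quotient `U / U₀` by an invariant submodule `U₀` is irreducible. -/
def IrreducibleOver (U₀ U : Submodule K V) : Prop :=
  U₀ < U ∧ π.Invariant U ∧
    ∀ U', U₀ ≤ U' → U' ≤ U → π.Invariant U' → U' = U₀ ∨ U' = U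

/-- The action on the quotient `U / U₀` by an invariant submodule `U₀` is non-trivial. -/
def NontrivialOver (U₀ U : Submodule K V) : Prop := ∃ r a, ∃ x ∈ U, π.X r a x ∉ U₀

variable {π} {μ : Module.Dual K T} {x : V} {U U' : Submodule K V} {r s : Γ}

lemma mem_weightSpace : x ∈ π.weightSpace μ ↔ ∀ a, π.X 0 a x = μ a • x := by
  simp [weightSpace]

lemma mem_trivVectors : x ∈ π.trivVectors ↔ ∀ r a, π.X r a x = 0 := by
  simp [trivVectors]

lemma X_X_apply (r : Γ) (a : T) (s : Γ) (b : T) (x : V) :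
    π.X r a (π.X s b x) = π.X s b (π.X r a x) + π.X (r + s) (φ s a • b - φ r b • a) x := by
  rw [← π.lie_X, Ring.lie_def]
  simp

lemma X_mem_weightSpace (hx : x ∈ π.weightSpace μ) (r : Γ) (a : T) :
    π.X r a x ∈ π.weightSpace (μ + φ r) := by
  refine mem_weightSpace.2 fun b => ?_
  rw [X_X_apply, mem_weightSpace.1 hx b]
  simp [add_smul]

lemma eq_zero_of_mem_trivVectors_of_mem_weightSpace (hμ : μ ≠ 0) (hx : x ∈ π.trivVectors)
    (hxμ : x ∈ π.weightSpace μ) : x = 0 := by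
  obtain ⟨a, ha⟩ := DFunLike.ne_iff.1 hμ
  have hsmul : μ a • x = 0 := by rw [← mem_weightSpace.1 hxμ a, mem_trivVectors.1 hx 0 a]
  exact (smul_eq_zero.1 hsmul).resolve_left ha

lemma CosetBounded.add (h : π.CosetBounded μ) (r : Γ) : π.CosetBounded (μ + φ r) := by
  obtain ⟨N, hN⟩ := h
  exact ⟨N, fun s => by rw [add_assoc, ← map_add]; exact hN (r + s)⟩

lemma CosetBounded.finiteDimensional (h : π.CosetBounded μ) :
    FiniteDimensional K (π.weightSpace μ) := by
  obtain ⟨N, hN⟩ := h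
  have hle : Module.rank K (π.weightSpace μ) ≤ N := by
    rw [← add_zero μ, ← map_zero φ]
    exact hN 0
  exact Module.rank_lt_aleph0_iff.1 (hle.trans_lt (Cardinal.natCast_lt_aleph0))

lemma trivVectors_le_weightSpace_zero : π.trivVectors ≤ π.weightSpace 0 := fun x hx =>
  mem_weightSpace.2 fun a => by simp [mem_trivVectors.1 hx]

section Invariant

lemma invariant_bot : π.Invariant ⊥ := fun r a => Module.End.invtSubmodule.bot_mem (π.X r a)

lemma invariant_trivVectors : π.Invariant π.trivVectors := fun r a x hx => by
  change π.X r a x ∈ π.trivVectors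
  rw [mem_trivVectors.1 hx]
  exact zero_mem _

lemma Invariant.sup (hU : π.Invariant U) (hU' : π.Invariant U') : π.Invariant (U ⊔ U') :=
  fun r a => Sublattice.sup_mem (hU r a) (hU' r a)

lemma Invariant.inf (hU : π.Invariant U) (hU' : π.Invariant U') : π.Invariant (U ⊓ U') :=
  fun r a => Sublattice.inf_mem (hU r a) (hU' r a)

lemma invariant_sInf {A : Set (Submodule K V)} (hA : ∀ U ∈ A, π.Invariant U) :
    π.Invariant (sInf A) := fun r a _ hx =>
  Submodule.mem_sInf.2 fun U hU => hA U hU r a (Submodule.mem_sInf.1 hx U hU)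

lemma invariant_iSup_weightSpace (μ : Module.Dual K T) :
    π.Invariant (⨆ r, π.weightSpace (μ + φ r)) := fun s a =>
  Module.End.mem_invtSubmodule _ |>.2 <| iSup_le fun r x hx =>
    Submodule.mem_iSup_of_mem (p := fun r => π.weightSpace (μ + φ r)) (r + s) <| by
      simpa only [map_add, add_assoc] using X_mem_weightSpace hx s a

lemma mem_of_sum_mem {ι : Type*} {ν : ι → Module.Dual K T} (hν : Function.Injective ν)
    (hU : π.Invariant U) {t : Finset ι} {x : ι → V} (hx : ∀ i ∈ t, x i ∈ π.weightSpace (ν i))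
    (hsum : ∑ i ∈ t, x i ∈ U) : ∀ i ∈ t, x i ∈ U := by
  refine mem_of_sum_mem_of_separating U t x (fun i _ j _ hij => ?_) hsum
  obtain ⟨a, ha⟩ := DFunLike.ne_iff.1 (hν.ne hij)
  exact ⟨π.X 0 a, fun k => ν k a, hU 0 a, fun k hk => mem_weightSpace.1 (hx k hk) a, ha⟩

lemma iSupIndep_weightSpace : iSupIndep π.weightSpace := by
  classical
  exact (iSupIndep_iff_finsetSum_eq_zero_imp_eq_zero _).2 fun t x hx hsum =>
    mem_of_sum_mem (ν := id) Function.injective_id invariant_bot hx hsum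

lemma Invariant.exists_inf_weightSpace_not_le {ι : Type*} {ν : ι → Module.Dual K T}
    (hν : Function.Injective ν) (hU : π.Invariant U) (hle : U ≤ ⨆ i, π.weightSpace (ν i))
    (hU' : ¬ U ≤ U') : ∃ i, ¬ U ⊓ π.weightSpace (ν i) ≤ U' := by
  contrapose! hU'
  intro x hx
  obtain ⟨f, hf, rfl⟩ := (Submodule.mem_iSup_iff_exists_finsupp _ _).1 (hle hx)
  exact U'.sum_mem fun i hi => hU' i ⟨mem_of_sum_mem hν hU (fun j _ => hf j) hx i hi, hf i⟩

end Invariant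

lemma irreducibleOver_span_singleton (hx : x ∈ π.trivVectors) (hx0 : x ≠ 0) :
    π.IrreducibleOver ⊥ (K ∙ x) := by
  have hatom := nonzero_span_atom (K := K) x hx0
  refine ⟨hatom.bot_lt, fun r a y hy => ?_, fun U' _ hle _ => hatom.le_iff.1 hle⟩
  change π.X r a y ∈ K ∙ x
  rw [mem_trivVectors.1 ((Submodule.span_singleton_le_iff_mem x _).2 hx hy)]
  exact zero_mem _

section Annihilation

lemma X_add_eq_zero_of_comp_eq_zero (hφ : Function.Injective φ) (hrs : r ≠ s)
    (h : ∀ a b, π.X r a (π.X s b x) = 0) (h' : ∀ a b, π.X s b (π.X r a x) = 0) (a : T) :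
    π.X (r + s) a x = 0 := by
  have hsub : φ s - φ r ≠ 0 := sub_ne_zero.2 (hφ.ne hrs.symm)
  have hflip : (π.X (r + s)).flip x = 0 := eq_zero_of_forall_dual_ne_zero hsub fun a ha => by
    have hcomm := X_X_apply (π := π) r a s a x
    rw [h, h', zero_add, ← sub_smul, map_smul, LinearMap.smul_apply] at hcomm
    exact (smul_eq_zero.1 hcomm.symm).resolve_left ha
  exact LinearMap.congr_fun hflip a

lemma add_mem_annDegrees (hφ : Function.Injective φ) (hr : r ∈ π.annDegrees x)
    (hs : s ∈ π.annDegrees x) (hrs : r ≠ s) : r + s ∈ π.annDegrees x :=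
  X_add_eq_zero_of_comp_eq_zero hφ hrs (fun a b => by rw [hs b, map_zero])
    fun a b => by rw [hr a, map_zero]

lemma mem_trivVectors_iff_annDegrees : x ∈ π.trivVectors ↔ π.annDegrees x = Set.univ :=
  mem_trivVectors.trans Set.eq_univ_iff_forall.symm

lemma mem_trivVectors_of_forall_X_mem [IsAddTorsionFree Γ] [Nontrivial Γ]
    (hφ : Function.Injective φ) (hx : ∀ r a, π.X r a x ∈ π.trivVectors) : x ∈ π.trivVectors := by
  refine mem_trivVectors.2 fun m => ?_
  -- Elements of degree `m` are sums of commutators of elements of degrees `r` and `m - r`.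
  obtain ⟨r, hr⟩ : ∃ r, r ≠ m - r := by
    by_contra! h
    obtain ⟨r, hr⟩ := exists_ne (0 : Γ)
    obtain rfl : m = 0 := by simpa using (h 0).symm
    exact hr (self_eq_neg.1 (by simpa using h r))
  rw [← add_sub_cancel r m]
  exact X_add_eq_zero_of_comp_eq_zero hφ hr (fun a b => mem_trivVectors.1 (hx _ b) _ a)
    fun a b => mem_trivVectors.1 (hx _ a) _ b

lemma isWittAction (r : Γ) {a : T} (ha : φ r a ≠ 0) :
    IsWittAction fun k : ℤ => (φ r a)⁻¹ • π.X (k • r) a := by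
  intro m k
  have hpair (j : ℤ) : φ (j • r) a = j * φ r a := by
    rw [map_zsmul, LinearMap.smul_apply, zsmul_eq_mul]
  have hlie := π.lie_X (m • r) a (k • r) a
  rw [← sub_smul, hpair, hpair, ← add_zsmul, map_smul, Ring.lie_def] at hlie
  rw [Ring.lie_def, smul_mul_smul_comm, smul_mul_smul_comm, ← smul_sub, hlie, smul_smul, smul_smul]
  congr 1
  field_simp

variable [CharZero K]

lemma zsmul_mem_annDegrees (hφ : Function.Injective φ) (hμ : π.CosetBounded μ)
    (hx : x ∈ π.weightSpace μ) (hr : r ≠ 0) (hpos : ∀ k : ℤ, 1 ≤ k → k • r ∈ π.annDegrees x)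
    (k : ℤ) : k • r ∈ π.annDegrees x := by
  have hφr : φ r ≠ 0 := (map_ne_zero_iff φ hφ).2 hr
  have hflip : (π.X (k • r)).flip x = 0 := eq_zero_of_forall_dual_ne_zero hφr fun a ha => by
    set L : ℤ → Module.End K V := fun k => (φ r a)⁻¹ • π.X (k • r) a with hLdef
    obtain ⟨N, hN⟩ := hμ
    have hrank (s : ℤ) :
        Module.rank K (Submodule.span K (Set.range fun k => L k (L (s - k) x))) ≤ N := by
      refine (Submodule.rank_mono (Submodule.span_le.2 ?_)).trans (hN (s • r))
      rintro _ ⟨k, rfl⟩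
      simp only [hLdef, LinearMap.smul_apply, map_smul]
      have hmem := X_mem_weightSpace (X_mem_weightSpace hx ((s - k) • r) a) (k • r) a
      rw [add_assoc, ← map_add, ← add_zsmul, sub_add_cancel] at hmem
      exact Submodule.smul_mem _ _ (Submodule.smul_mem _ _ hmem)
    have hzero := (isWittAction r ha).apply_eq_zero_of_forall_pos hrank
      (fun k hk => by simp [hpos k hk a]) k
    exact (smul_eq_zero.1 hzero).resolve_left (inv_ne_zero ha)
  exact LinearMap.congr_fun hflip

variable {B : Finset Γ}

lemma exists_add_notMem_annDegrees (hφ : Function.Injective φ) [IsAddTorsionFree Γ]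
    (hμ : π.CosetBounded μ) (h0 : 0 ∈ B) (hneg : ∀ e ∈ B, -e ∈ B)
    (hB : AddSubgroup.closure (B : Set Γ) = ⊤) (hx : x ∈ π.weightSpace μ)
    (hxtriv : x ∉ π.trivVectors) (hr : r ≠ 0) : ∃ e ∈ B, r + e ∉ π.annDegrees x := by
  by_contra! hrB
  have hP : ∀ a ∈ π.annDegrees x, ∀ b ∈ π.annDegrees x, a ≠ b → a + b ∈ π.annDegrees x :=
    fun a ha b hb hab => add_mem_annDegrees hφ ha hb hab
  refine hxtriv (mem_trivVectors_iff_annDegrees.2 ?_)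
  refine eq_univ_of_zsmul_mem hP hneg hB hr hrB (zsmul_mem_annDegrees hφ hμ hx hr fun k hk => ?_)
  exact zsmul_mem_of_forall_add_mem hP h0 hneg hB hr hrB hk

end Annihilation

section Bounded

variable [CharZero K] [IsAddTorsionFree Γ]

lemma not_inf_iSup_weightSpace_le_trivVectors (hφ : Function.Injective φ) {B : Finset Γ} {t : Γ}
    (h0 : 0 ∈ B) (hneg : ∀ e ∈ B, -e ∈ B) (hB : AddSubgroup.closure (B : Set Γ) = ⊤)
    (hμ : π.CosetBounded μ) (ht : ∀ e ∈ B, μ + φ (t + e) ≠ 0) (hU : π.Invariant U)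
    (hle : U ≤ ⨆ r, π.weightSpace (μ + φ r)) (htriv : ¬ U ≤ π.trivVectors) :
    ¬ U ⊓ ⨆ e : B, π.weightSpace (μ + φ (t + e)) ≤ π.trivVectors := by
  suffices h : ∃ e ∈ B, ∃ y ∈ U, y ∈ π.weightSpace (μ + φ (t + e)) ∧ y ≠ 0 by
    obtain ⟨e, he, y, hyU, hyμ, hy⟩ := h
    exact fun hF => hy <| eq_zero_of_mem_trivVectors_of_mem_weightSpace (ht e he)
      (hF ⟨hyU, Submodule.mem_iSup_of_mem (⟨e, he⟩ : B) hyμ⟩) hyμ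
  obtain ⟨r, hr⟩ := hU.exists_inf_weightSpace_not_le
    ((add_right_injective μ).comp hφ) hle htriv
  obtain ⟨x, ⟨hxU, hxμ : x ∈ π.weightSpace (μ + φ r)⟩, hx⟩ := Set.not_subset.1 hr
  rcases eq_or_ne t r with rfl | htr
  · exact ⟨0, h0, x, hxU, by rwa [add_zero], fun h => hx (h ▸ zero_mem _)⟩
  · obtain ⟨e, he, hxe⟩ := exists_add_notMem_annDegrees hφ (hμ.add r) h0 hneg hB hxμ hx
      (sub_ne_zero.2 htr)
    obtain ⟨a, ha⟩ := not_forall.1 hxe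
    refine ⟨e, he, _, hU _ a hxU, ?_, ha⟩
    convert X_mem_weightSpace hxμ (t - r + e) a using 2
    rw [add_assoc, ← map_add, ← add_assoc, add_sub_cancel]

variable [AddGroup.FG Γ] [Nontrivial Γ]

theorem exists_minimal_not_le_trivVectors (hφ : Function.Injective φ) (hμ : π.CosetBounded μ)
    (hne : ¬ π.weightSpace μ ≤ π.trivVectors) :
    ∃ U, Minimal (fun U => π.Invariant U ∧ ¬ U ≤ π.trivVectors) U := by
  obtain ⟨B, h0, hneg, hB⟩ := exists_finset_symm_closure_eq_top (Γ := Γ)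
  have hfin : {r | μ + φ r = 0}.Finite := Set.Subsingleton.finite fun r hr s hs =>
    hφ (add_left_cancel (hr.trans hs.symm))
  obtain ⟨t, ht⟩ := exists_forall_add_notMem B hfin.toFinset
  have (e : B) : FiniteDimensional K (π.weightSpace (μ + φ (t + e))) :=
    (hμ.add _).finiteDimensional
  have hle : π.weightSpace μ ≤ ⨆ r, π.weightSpace (μ + φ r) := by
    simpa using le_iSup (fun r => π.weightSpace (μ + φ r)) 0
  exact exists_minimal_not_le (fun _ => invariant_sInf)
    (⨆ e : B, π.weightSpace (μ + φ (t + e))) π.trivVectors (invariant_iSup_weightSpace μ)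
    (fun h => hne (hle.trans h)) fun U hU hUinv hUtriv =>
      not_inf_iSup_weightSpace_le_trivVectors hφ h0 hneg hB hμ (by simpa using ht) hUinv hU hUtriv

theorem weightSpace_le_trivVectors [FiniteDimensional K V] (hφ : Function.Injective φ)
    (μ : Module.Dual K T) : π.weightSpace μ ≤ π.trivVectors := by
  classical
  by_contra hμ
  obtain ⟨x, hxμ, hx⟩ := Set.not_subset.1 hμ
  obtain ⟨B, h0, hneg, hB⟩ := exists_finset_symm_closure_eq_top (Γ := Γ)
  have hfin : {r | π.weightSpace (μ + φ r) ≠ ⊥}.Finite := WellFoundedGT.finite_ne_bot_of_iSupIndep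
    (iSupIndep_weightSpace.comp ((add_right_injective μ).comp hφ))
  obtain ⟨t, ht⟩ := exists_forall_add_notMem B (insert 0 hfin.toFinset)
  have hbdd : π.CosetBounded μ := ⟨Module.finrank K V, fun r =>
    (Submodule.rank_le _).trans (Module.finrank_eq_rank K V).ge⟩
  obtain ⟨e, he, hxe⟩ := exists_add_notMem_annDegrees hφ hbdd h0 hneg hB hxμ hx
    (r := t) fun h => ht 0 h0 (by simp [h])
  refine hxe fun a => (Submodule.mem_bot K).1 ?_
  have hbot : π.weightSpace (μ + φ (t + e)) = ⊥ := by
    by_contra h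
    exact ht e he (Finset.mem_insert_of_mem (hfin.mem_toFinset.2 h))
  exact hbot ▸ X_mem_weightSpace hxμ (t + e) a

theorem exists_irreducibleOver_trivVectors (hφ : Function.Injective φ) (hμ : π.CosetBounded μ)
    (hne : ¬ π.weightSpace μ ≤ π.trivVectors) :
    ∃ U, π.IrreducibleOver π.trivVectors U ∧ π.NontrivialOver π.trivVectors U := by
  obtain ⟨U, hU⟩ := exists_minimal_not_le_trivVectors hφ hμ hne
  refine ⟨π.trivVectors ⊔ U, ⟨left_lt_sup.2 hU.prop.2, invariant_trivVectors.sup hU.prop.1, ?_⟩, ?_⟩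
  · exact fun U' hle hle' hU' =>
      eq_or_eq_sup_of_minimal (fun _ _ => Invariant.inf) hU hU' hle hle'
  · by_contra htriv
    simp only [NontrivialOver, not_exists, not_and, not_not] at htriv
    exact hU.prop.2 fun x hx => mem_trivVectors_of_forall_X_mem hφ fun r a =>
      htriv r a x (Submodule.mem_sup_right hx)

theorem finiteDimensional_and_trivVectors_eq_top_or (hφ : Function.Injective φ)
    (hw : ⨆ μ, π.weightSpace μ = ⊤) (hπ : ∀ μ, π.CosetBounded μ) :
    (FiniteDimensional K V ∧ π.trivVectors = ⊤) ∨
      (¬ FiniteDimensional K V ∧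
        ∃ U, π.IrreducibleOver π.trivVectors U ∧ π.NontrivialOver π.trivVectors U) := by
  by_cases h : ∀ μ, π.weightSpace μ ≤ π.trivVectors
  · have htop : π.trivVectors = ⊤ := top_unique (hw ▸ iSup_le h)
    have hzero : π.weightSpace 0 = ⊤ := top_unique (htop ▸ trivVectors_le_weightSpace_zero)
    have hfin := (hπ 0).finiteDimensional
    rw [hzero] at hfin
    exact .inl ⟨Module.Finite.equiv Submodule.topEquiv, htop⟩
  · obtain ⟨μ, hμ⟩ := not_forall.1 h
    exact .inr ⟨fun _ => hμ (weightSpace_le_trivVectors hφ μ),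
      exists_irreducibleOver_trivVectors hφ (hπ μ) hμ⟩

theorem exists_irreducibleOver_bot [Nontrivial V] (hφ : Function.Injective φ)
    (hw : ⨆ μ, π.weightSpace μ = ⊤) (hπ : ∀ μ, π.CosetBounded μ) :
    ∃ U, π.IrreducibleOver ⊥ U := by
  by_cases htriv : π.trivVectors = ⊥
  · rcases finiteDimensional_and_trivVectors_eq_top_or hφ hw hπ with ⟨-, htop⟩ | ⟨-, U, hU, -⟩
    · exact absurd (htriv.symm.trans htop) bot_ne_top
    · exact ⟨U, htriv ▸ hU⟩
  · obtain ⟨x, hx, hx0⟩ := Submodule.exists_mem_ne_zero_of_ne_bot htriv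
    exact ⟨_, irreducibleOver_span_singleton hx hx0⟩

end Bounded

end GenWittRep
end GenWittRep

namespace ExtWittRep

variable {n : ℕ} {S V : Type*} [AddCommGroup S] [Module ℂ S] [AddCommGroup V] [Module ℂ V]

/-- The weight of the Cartan subalgebra `ℂⁿ × S` given by `lam` on `ℂⁿ` and by `c` on `S`. -/
def weight (lam : Fin n → ℂ) (c : Module.Dual ℂ S) : Module.Dual ℂ ((Fin n → ℂ) × S) :=
  (Fintype.linearCombination ℂ lam).coprod c

/-- The pairing `(u, s) ↦ (u | r)` of `ℤⁿ` with `ℂⁿ × S`, which is zero on `S`. -/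
def degreePairing (n : ℕ) (S : Type*) [AddCommGroup S] [Module ℂ S] :
    (Fin n → ℤ) →+ Module.Dual ℂ ((Fin n → ℂ) × S) :=
  .mk' (fun r => weight (fun i => (r i : ℂ)) 0) fun r r' => by
    ext <;> simp [weight]

lemma weight_apply (lam : Fin n → ℂ) (c : Module.Dual ℂ S) (a : (Fin n → ℂ) × S) :
    weight lam c a = pairCC a.1 lam + c a.2 := rfl

lemma degreePairing_apply (r : Fin n → ℤ) (a : (Fin n → ℂ) × S) :
    degreePairing n S r a = pairC a.1 r := add_zero _

lemma weight_surjective (μ : Module.Dual ℂ ((Fin n → ℂ) × S)) : ∃ lam c, weight lam c = μ :=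
  ⟨fun i => μ (Pi.single i 1, 0), μ ∘ₗ LinearMap.inr ℂ _ S, by ext <;> simp [weight]⟩

lemma degreePairing_injective : Function.Injective (degreePairing n S) := fun r r' h => by
  ext i
  have hi := LinearMap.congr_fun h (Pi.single i 1, 0)
  simpa [degreePairing_apply, pairC, Pi.single_apply] using hi

lemma weight_add_degreePairing (lam : Fin n → ℂ) (c : Module.Dual ℂ S) (r : Fin n → ℤ) :
    weight lam c + degreePairing n S r = weight (lam + fun i => (r i : ℂ)) c := by
  ext <;> simp [weight, degreePairing]

variable (ρ : ExtWittRep n S ℂ V)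

/-- A representation of `𝔏_{S,n}` as a representation of the generalised Witt algebra
`(ℂⁿ × S) ⊗ Aₙ`, the element `(u, s) ⊗ tʳ` being `D(u,r) + s ⊗ tʳ`. -/
def toGenWittRep : GenWittRep (degreePairing n S) V where
  X r := LinearMap.coprod
    { toFun := fun u => ρ.D u r 1
      map_add' := fun u u' => ρ.D_add_u u u' r 1
      map_smul' := fun c u => ρ.D_smul_u c u r 1 }
    { toFun := fun s => ρ.E s r 1
      map_add' := fun s s' => ρ.E_add_s s s' r 1
      map_smul' := fun c s => ρ.E_smul_s c s r 1 }
  lie_X r a m b := by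
    have hadd (f g f' g' : Module.End ℂ V) :
        ⁅f + g, f' + g'⁆ = ⁅f, f'⁆ + ⁅f, g'⁆ - ⁅f', g⁆ + ⁅g, g'⁆ := by
      simp only [Ring.lie_def]
      noncomm_ring
    simp only [LinearMap.coprod_apply, LinearMap.coe_mk, AddHom.coe_mk, hadd, ρ.comm_DD,
      ρ.comm_DE, ρ.comm_EE, degreePairing_apply, map_sub, map_smul, mul_one, add_comm m r]
    simp only [sub_eq_add_neg, ← neg_smul, ρ.D_add_u, ρ.D_smul_u]
    module

lemma toGenWittRep_X (r : Fin n → ℤ) (a : (Fin n → ℂ) × S) :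
    ρ.toGenWittRep.X r a = ρ.D a.1 r 1 + ρ.E a.2 r 1 := rfl

lemma D_eq_smul_toGenWittRep_X (u : Fin n → ℂ) (r : Fin n → ℤ) (b : ℂ) :
    ρ.D u r b = b • ρ.toGenWittRep.X r (u, 0) := by
  have hE : ρ.E 0 r 1 = 0 := by simpa using ρ.E_smul_s 0 0 r 1
  rw [toGenWittRep_X, hE, add_zero, ← ρ.D_smul_b, smul_eq_mul, mul_one]

lemma E_eq_smul_toGenWittRep_X (s : S) (r : Fin n → ℤ) (b : ℂ) :
    ρ.E s r b = b • ρ.toGenWittRep.X r (0, s) := by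
  have hD : ρ.D 0 r 1 = 0 := by simpa using ρ.D_smul_u 0 0 r 1
  rw [toGenWittRep_X, hD, zero_add, ← ρ.E_smul_b, smul_eq_mul, mul_one]

lemma forall_toGenWittRep_X_mem_iff {U U₀ : Submodule ℂ V} :
    (∀ r a, ∀ x ∈ U, ρ.toGenWittRep.X r a x ∈ U₀) ↔
      (∀ u r b, ∀ x ∈ U, ρ.D u r b x ∈ U₀) ∧ ∀ s m b, ∀ x ∈ U, ρ.E s m b x ∈ U₀ := by
  refine ⟨fun h => ⟨fun u r b x hx => ?_, fun s m b x hx => ?_⟩, fun h r a x hx => ?_⟩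
  · rw [D_eq_smul_toGenWittRep_X]
    exact U₀.smul_mem b (h r _ x hx)
  · rw [E_eq_smul_toGenWittRep_X]
    exact U₀.smul_mem b (h m _ x hx)
  · exact U₀.add_mem (h.1 _ r 1 x hx) (h.2 _ r 1 x hx)

lemma toGenWittRep_invariant_iff {U : Submodule ℂ V} :
    ρ.toGenWittRep.Invariant U ↔ ρ.Invariant U :=
  ρ.forall_toGenWittRep_X_mem_iff

lemma toGenWittRep_nontrivialOver_iff {U U₀ : Submodule ℂ V} :
    ρ.toGenWittRep.NontrivialOver U₀ U ↔
      (∃ u r b, ∃ x ∈ U, ρ.D u r b x ∉ U₀) ∨ ∃ s m b, ∃ x ∈ U, ρ.E s m b x ∉ U₀ := by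
  have h := (ρ.forall_toGenWittRep_X_mem_iff (U := U) (U₀ := U₀)).not
  rw [not_and_or] at h
  push Not at h
  exact h

lemma toGenWittRep_trivVectors : ρ.toGenWittRep.trivVectors = ρ.trivVectors := by
  ext x
  rw [GenWittRep.mem_trivVectors]
  refine ⟨fun h => ⟨fun u r b => ?_, fun s m b => ?_⟩, fun h r a => ?_⟩
  · rw [D_eq_smul_toGenWittRep_X, LinearMap.smul_apply, h, smul_zero]
  · rw [E_eq_smul_toGenWittRep_X, LinearMap.smul_apply, h, smul_zero]
  · rw [toGenWittRep_X, LinearMap.add_apply, h.1, h.2, add_zero]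

lemma toGenWittRep_weightSpace (lam : Fin n → ℂ) (c : Module.Dual ℂ S) :
    ρ.toGenWittRep.weightSpace (weight lam c) = ρ.weightSpace lam c := by
  ext x
  rw [GenWittRep.mem_weightSpace]
  refine ⟨fun h => ⟨fun u => ?_, fun s => ?_⟩, fun h a => ?_⟩
  · simpa [D_eq_smul_toGenWittRep_X, weight_apply] using h (u, 0)
  · simpa [E_eq_smul_toGenWittRep_X, weight_apply, pairCC] using h (0, s)
  · rw [toGenWittRep_X, LinearMap.add_apply, h.1, h.2, weight_apply, add_smul]

lemma trivVectors_le_weightSpace_zero : ρ.trivVectors ≤ ρ.weightSpace 0 0 := fun x hx =>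
  ⟨fun u => by simp [hx.1, pairCC], fun s => by simp [hx.2]⟩

variable {ρ}

lemma IsWeightModule.toGenWittRep (hw : ρ.IsWeightModule) :
    ⨆ μ, ρ.toGenWittRep.weightSpace μ = ⊤ := by
  refine top_unique (hw ▸ iSup_le fun p => ?_)
  rw [← toGenWittRep_weightSpace]
  exact le_iSup _ _

lemma toGenWittRep_cosetBounded
    (hb : ∀ lam c, ∃ N : ℕ, ∀ r : Fin n → ℤ,
      Module.rank ℂ (ρ.weightSpace (lam + fun i => (r i : ℂ)) c) ≤ N)
    (μ : Module.Dual ℂ ((Fin n → ℂ) × S)) : ρ.toGenWittRep.CosetBounded μ := by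
  obtain ⟨lam, c, rfl⟩ := weight_surjective μ
  obtain ⟨N, hN⟩ := hb lam c
  refine ⟨N, fun r => ?_⟩
  rw [weight_add_degreePairing, toGenWittRep_weightSpace]
  exact hN r

end ExtWittRep

end LoopWitt

theorem stmt7_general {n : ℕ} (hn : 1 ≤ n) {S V : Type*}
    [AddCommGroup S] [Module ℂ S] [AddCommGroup V] [Module ℂ V]
    (ρ : ExtWittRep n S ℂ V)
    (hne : ∃ x : V, x ≠ 0) (hw : ρ.IsWeightModule)
    (hb : ∀ lam c, ∃ N : ℕ, ∀ r : Fin n → ℤ,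
      Module.rank ℂ (ρ.weightSpace (lam + fun i => (r i : ℂ)) c) ≤ N) :
    (∃ U : Submodule ℂ V, U ≠ ⊥ ∧ ρ.Invariant U ∧
      ∀ U' : Submodule ℂ V, U' ≤ U → ρ.Invariant U' → U' = ⊥ ∨ U' = U) ∧
    (ρ.weightSpace 0 0 = ⊥ →
      ¬ FiniteDimensional ℂ V ∧
      ∃ U : Submodule ℂ V, U ≠ ⊥ ∧ ρ.Invariant U ∧
        (∀ U' : Submodule ℂ V, U' ≤ U → ρ.Invariant U' → U' = ⊥ ∨ U' = U) ∧
        ((∃ u r b, ∃ x ∈ U, ρ.D u r b x ≠ 0) ∨ ∃ s m b, ∃ x ∈ U, ρ.E s m b x ≠ 0)) ∧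
    (ρ.weightSpace 0 0 ≠ ⊥ →
      (FiniteDimensional ℂ V ∧ ∀ x : V, x ∈ ρ.trivVectors) ∨
      (¬ FiniteDimensional ℂ V ∧
        ∃ U : Submodule ℂ V, ρ.trivVectors < U ∧ ρ.Invariant U ∧
          ((∃ u r b, ∃ x ∈ U, ρ.D u r b x ∉ ρ.trivVectors) ∨
            ∃ s m b, ∃ x ∈ U, ρ.E s m b x ∉ ρ.trivVectors) ∧
          ∀ U' : Submodule ℂ V, ρ.trivVectors ≤ U' → U' ≤ U → ρ.Invariant U' →
            U' = ρ.trivVectors ∨ U' = U)) := by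
  have : Nonempty (Fin n) := ⟨⟨0, hn⟩⟩
  obtain ⟨x, hx⟩ := hne
  have : Nontrivial V := nontrivial_of_ne x 0 hx
  have hφ := ExtWittRep.degreePairing_injective (n := n) (S := S)
  have hbdd := ExtWittRep.toGenWittRep_cosetBounded hb
  obtain ⟨U₀, hU₀, hinv₀, hirr₀⟩ := GenWittRep.exists_irreducibleOver_bot hφ hw.toGenWittRep hbdd
  have hdich := GenWittRep.finiteDimensional_and_trivVectors_eq_top_or hφ hw.toGenWittRep hbdd
  simp only [ρ.toGenWittRep_trivVectors, GenWittRep.IrreducibleOver,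
    ρ.toGenWittRep_invariant_iff, ρ.toGenWittRep_nontrivialOver_iff] at hdich hinv₀ hirr₀
  refine ⟨⟨U₀, hU₀.ne', hinv₀, fun U' => hirr₀ U' bot_le⟩, fun h0 => ?_, fun _ => ?_⟩
  · have htriv : ρ.trivVectors = ⊥ := eq_bot_mono ρ.trivVectors_le_weightSpace_zero h0
    rw [htriv] at hdich
    rcases hdich with ⟨-, h⟩ | ⟨hfin, U, ⟨hU, hinv, hirr⟩, hnt⟩
    · exact absurd h bot_ne_top
    · exact ⟨hfin, U, hU.ne', hinv, fun U' => hirr U' bot_le, by simpa using hnt⟩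
  · rcases hdich with ⟨hfin, h⟩ | ⟨hfin, U, ⟨hU, hinv, hirr⟩, hnt⟩
    · exact .inl ⟨hfin, fun x => h ▸ Submodule.mem_top⟩
    · exact .inr ⟨hfin, U, hU, hinv, hnt, hirr⟩

/-- A non-zero uniformly bounded weight module `W` over `𝔏_{S,n}`
(the case `B = ℂ`) contains a non-zero irreducible submodule; if `0` is not a weight it
is infinite dimensional and contains a non-trivial irreducible submodule; if `0` is a
weight it is either finite dimensional and trivial, or infinite dimensional and the
quotient by the (maximal, finite dimensional) trivial submodule `W₁` contains a
non-trivial irreducible submodule. -/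
theorem stmt7 {n : ℕ} (hn : 1 ≤ n) {S V : Type*}
    [AddCommGroup S] [Module ℂ S] [FiniteDimensional ℂ S]
    [AddCommGroup V] [Module ℂ V]
    (ρ : ExtWittRep n S ℂ V)
    (hne : ∃ x : V, x ≠ 0) (hw : ρ.IsWeightModule) (hub : ρ.UniformlyBounded) :
    -- `W` contains a non-zero irreducible `𝔏_{S,n}`-submodule
    (∃ U : Submodule ℂ V, U ≠ ⊥ ∧ ρ.Invariant U ∧
      ∀ U' : Submodule ℂ V, U' ≤ U → ρ.Invariant U' → U' = ⊥ ∨ U' = U) ∧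
    -- (1) `0 ∉ Supp W`
    (ρ.weightSpace 0 0 = ⊥ →
      ¬ FiniteDimensional ℂ V ∧
      ∃ U : Submodule ℂ V, U ≠ ⊥ ∧ ρ.Invariant U ∧
        (∀ U' : Submodule ℂ V, U' ≤ U → ρ.Invariant U' → U' = ⊥ ∨ U' = U) ∧
        ((∃ u r b, ∃ x ∈ U, ρ.D u r b x ≠ 0) ∨ ∃ s m b, ∃ x ∈ U, ρ.E s m b x ≠ 0)) ∧
    -- (2) `0 ∈ Supp W`
    (ρ.weightSpace 0 0 ≠ ⊥ →
      (FiniteDimensional ℂ V ∧ ∀ x : V, x ∈ ρ.trivVectors) ∨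
      (¬ FiniteDimensional ℂ V ∧
        ∃ U : Submodule ℂ V, ρ.trivVectors < U ∧ ρ.Invariant U ∧
          ((∃ u r b, ∃ x ∈ U, ρ.D u r b x ∉ ρ.trivVectors) ∨
            ∃ s m b, ∃ x ∈ U, ρ.E s m b x ∉ ρ.trivVectors) ∧
          ∀ U' : Submodule ℂ V, ρ.trivVectors ≤ U' → U' ≤ U → ρ.Invariant U' →
            U' = ρ.trivVectors ∨ U' = U)) := by
  obtain ⟨N, hN⟩ := hub
  exact stmt7_general hn ρ hne hw fun lam c => ⟨N, fun r => hN _ c⟩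
end
end

section
/- Let n ≥ 2 and let V be an irreducible weight module for the extended Witt algebra 𝔏_{S,n} with finite dimensional but not uniformly bounded weight spaces. Then there exist β ∈ ℤ^n, a subgroup M of ℤ^n with ℤ^n = M ⊕ ℤβ, and an irreducible (𝔏_{S,n})_M-module Y such that V ≅ L_{𝔏_{S,n}}(Y, β, M), the unique irreducible subquotient of the generalised Verma module Ind from Y. -/
open scoped TensorProduct

noncomputable section

open LoopWitt

/-!
The degrees annihilating a given vector are closed under sums of distinct elements, and as the
weight spaces are not uniformly bounded, some vector is annihilated by a set of degrees large enough
to contain a whole cone. So the set of directions `r` along which the degrees `a + k r` eventually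
annihilate every vector is not empty. It is archimedean, and both it and its complement are closed
under addition; by Hölder's theorem it is the open half space `0 < φ` of a real linear form `φ`. The
weights of `V` are bounded above with respect to `φ`.

The form `φ` has discrete image. Otherwise take `ε` of very small positive height and a nonzero
vector `v` annihilated by all degrees higher than `ε`: the vectors `D(u, -i ε) D(w, -γ + i ε) v`,
where `w` is orthogonal to `ε`, are almost independent and lie in one weight space, whose dimension
would be infinite. Hence `ℤⁿ = ker φ ⊕ ℤ β`, and the weights of maximal height make up a subspace
which is annihilated by the degrees of positive height and irreducible under those in `ker φ`.
-/

namespace LoopWitt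

open Filter Topology

section RecessionCone

variable {G : Type*} [AddCommGroup G] {Z : Set G}

/-- Closure under sums of distinct elements: the property that the bracket of a Witt algebra
gives to the set of degrees annihilating a vector, where `[D(u,r), D(v,r)]` does not reach all of
the degree `2r`. -/
def DistinctSumClosed (Z : Set G) : Prop :=
  ∀ ⦃a⦄, a ∈ Z → ∀ ⦃b⦄, b ∈ Z → a ≠ b → a + b ∈ Z

/-- The directions `r` such that every ray `a + ℕ r` eventually stays in `Z`. -/
def recessionCone (Z : Set G) : Set G := {r | ∀ a, ∀ᶠ k : ℕ in atTop, k • r + a ∈ Z}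

lemma eventually_nsmul_add_ne [IsAddTorsionFree G] {p : G} (hp : p ≠ 0) (a b : G) :
    ∀ᶠ k : ℕ in atTop, k • p + a ≠ b := by
  have hinj : Function.Injective fun k : ℕ => k • p + a :=
    (add_left_injective a).comp (injective_nsmul_iff_not_isOfFinAddOrder.mpr
      (not_isOfFinAddOrder_of_isAddTorsionFree hp))
  rw [← Nat.cofinite_eq_atTop]
  exact hinj.tendsto_cofinite.eventually (eventually_cofinite_ne b)

namespace DistinctSumClosed

lemma eventually_nsmul_add_mem (hZ : DistinctSumClosed Z) {p a b : G}
    (ha : ∀ᶠ k : ℕ in atTop, k • p + a ∈ Z) (hb : ∀ᶠ k : ℕ in atTop, k • p + b ∈ Z)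
    (hab : ∀ K : ℕ, ∀ᶠ k : ℕ in atTop, k • p + b ≠ K • p + a) :
    ∀ᶠ k : ℕ in atTop, k • p + (a + b) ∈ Z := by
  obtain ⟨K, hK⟩ := ha.exists
  filter_upwards [(tendsto_sub_atTop_nat K).eventually (hb.and (hab K)), eventually_ge_atTop K]
    with k ⟨hk, hne⟩ hKk
  have hsplit : k • p + (a + b) = (K • p + a) + ((k - K) • p + b) := by
    rw [add_add_add_comm, ← add_nsmul, Nat.add_sub_cancel' hKk]
  exact hsplit ▸ hZ hK hk hne.symm

lemma eventually_nsmul_add_mem_of_add_mem (hZ : DistinctSumClosed Z) {p e : G} (hp : p ∈ Z)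
    (hpe : p + e ∈ Z) (he : ∀ k : ℕ, k • p ≠ -e) : ∀ᶠ k : ℕ in atTop, k • p + e ∈ Z := by
  refine eventually_atTop.mpr ⟨1, fun k hk => ?_⟩
  induction k, hk using Nat.le_induction with
  | base => rwa [one_nsmul]
  | succ k hk ih =>
    obtain ⟨l, rfl⟩ := Nat.exists_eq_add_of_le' hk
    have hne : (l + 1) • p + e ≠ p := by
      rw [succ_nsmul, add_right_comm, Ne, add_eq_right]
      exact fun h => he l (eq_neg_of_add_eq_zero_left h)
    convert hZ ih hp hne using 1
    rw [succ_nsmul _ (l + 1)]; abel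

lemma add_mem_recessionCone [IsAddTorsionFree G] (hZ : DistinctSumClosed Z) {r r' : G}
    (hr : r ∈ recessionCone Z) (hr' : r' ∈ recessionCone Z) : r + r' ∈ recessionCone Z := by
  rcases eq_or_ne r 0 with rfl | hr0
  · rwa [zero_add]
  intro a
  filter_upwards [hr a, hr' 0, hr (a + r), hr' (-r)] with k h₁ h₂ h₃ h₄
  by_cases heq : k • r + a = k • r' + 0
  · have hne : k • r + (a + r) ≠ k • r' + -r := by
      intro h
      rw [← add_assoc, heq, add_zero, add_right_inj] at h
      exact hr0 (self_eq_neg.mp h)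
    convert hZ h₃ h₄ hne using 1
    rw [nsmul_add]; abel
  · convert hZ h₁ h₂ heq using 1
    rw [nsmul_add]; abel

lemma add_mem_recessionCone_of_mem {H : Type*} [AddCommGroup H] [IsAddTorsionFree H]
    (hZ : DistinctSumClosed Z) {r α : G} (hr : r ∈ recessionCone Z) (hα : α ∈ Z)
    {ω : G →+ H} (hω : ω ≠ 0) (hωα : ω α = 0) : r + α ∈ recessionCone Z := by
  obtain ⟨e, he⟩ := DFunLike.ne_iff.mp hω
  rw [AddMonoidHom.zero_apply] at he
  have hline : ∀ b ∈ Z, ω b ≠ 0 → ∀ k : ℕ, b + k • α ∈ Z := by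
    intro b hb hωb k
    induction k with
    | zero => simpa using hb
    | succ k ih =>
      rw [succ_nsmul, ← add_assoc]
      refine hZ ih hα fun h => hωb ?_
      simpa [-nsmul_eq_mul, hωα] using congrArg ω h
  have hgood : ∀ a, (∀ᶠ k : ℕ in atTop, k • ω r + ω a ≠ 0) →
      ∀ᶠ k : ℕ in atTop, k • (r + α) + a ∈ Z := by
    intro a ha
    filter_upwards [ha, hr a] with k hk hkZ
    convert hline _ hkZ (by rwa [map_add, map_nsmul]) k using 1
    rw [nsmul_add]; abel
  intro a
  by_cases hωr : ω r = 0
  · by_cases hωa : ω a = 0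
    · rw [← add_sub_cancel e a]
      refine hZ.eventually_nsmul_add_mem (hgood e ?_) (hgood (a - e) ?_) fun K => ?_
      · exact Eventually.of_forall fun k => by simpa [hωr] using he
      · exact Eventually.of_forall fun k => by simpa [hωr, hωa] using he
      · refine Eventually.of_forall fun k h => he (self_eq_neg.mp ?_)
        simpa [-nsmul_eq_mul, hωr, hωα, hωa] using (congrArg ω h).symm
    · exact hgood a (Eventually.of_forall fun k => by simpa [hωr] using hωa)
  · exact hgood a (eventually_nsmul_add_ne hωr _ _)

lemma mem_recessionCone_of_closure_eq_top [IsAddTorsionFree G] (hZ : DistinctSumClosed Z) {p : G}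
    (hp0 : p ≠ 0) (hp : p ∈ Z) {E : Set G} (hE : AddSubgroup.closure E = ⊤) (hne : E.Nonempty)
    (hadd : ∀ e ∈ E, p + e ∈ Z) (hsub : ∀ e ∈ E, p - e ∈ Z) (hline : ∀ e ∈ E, ∀ l : ℤ, l • p ≠ e) :
    p ∈ recessionCone Z := by
  have hsum : ∀ {a b}, (∀ᶠ k : ℕ in atTop, k • p + a ∈ Z) → (∀ᶠ k : ℕ in atTop, k • p + b ∈ Z) →
      ∀ᶠ k : ℕ in atTop, k • p + (a + b) ∈ Z := fun ha hb =>
    hZ.eventually_nsmul_add_mem ha hb fun K => eventually_nsmul_add_ne hp0 _ _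
  have hpos : ∀ e ∈ E, ∀ᶠ k : ℕ in atTop, k • p + e ∈ Z := fun e he =>
    hZ.eventually_nsmul_add_mem_of_add_mem hp (hadd e he) fun k h =>
      hline e he (-k) (by rw [neg_zsmul, natCast_zsmul, h, neg_neg])
  have hneg : ∀ e ∈ E, ∀ᶠ k : ℕ in atTop, k • p + -e ∈ Z := fun e he =>
    hZ.eventually_nsmul_add_mem_of_add_mem hp (sub_eq_add_neg p e ▸ hsub e he) fun k h =>
      hline e he k (by rw [natCast_zsmul, h, neg_neg])
  suffices ∀ a, (∀ᶠ k : ℕ in atTop, k • p + a ∈ Z) ∧ ∀ᶠ k : ℕ in atTop, k • p + -a ∈ Z from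
    fun a => (this a).1
  intro a
  have ha : a ∈ AddSubgroup.closure E := hE ▸ AddSubgroup.mem_top a
  induction ha using AddSubgroup.closure_induction with
  | mem e he => exact ⟨hpos e he, hneg e he⟩
  | zero =>
    obtain ⟨e, he⟩ := hne
    have := hsum (hpos e he) (hneg e he)
    rw [add_neg_cancel] at this
    exact ⟨this, by rwa [neg_zero]⟩
  | add a b _ _ ha hb => exact ⟨hsum ha.1 hb.1, neg_add a b ▸ hsum ha.2 hb.2⟩
  | neg a _ ha => exact ⟨ha.2, by rw [neg_neg]; exact ha.1⟩

end DistinctSumClosed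

lemma mem_recessionCone_of_nsmul_mem {q : ℕ} (hq : q ≠ 0) {r : G}
    (hr : q • r ∈ recessionCone Z) : r ∈ recessionCone Z := by
  intro a
  have hev : ∀ᶠ k : ℕ in atTop, ∀ j : Fin q, k • q • r + ((j : ℕ) • r + a) ∈ Z :=
    eventually_all.mpr fun j => hr _
  filter_upwards [(Nat.tendsto_div_const_atTop hq).eventually hev] with k hk
  convert hk ⟨k % q, Nat.mod_lt k (Nat.pos_of_ne_zero hq)⟩ using 1
  rw [← add_assoc, ← mul_nsmul, ← add_nsmul, Nat.div_add_mod]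

end RecessionCone

section RealHeight

variable {G : Type*} [AddCommGroup G]

/-- The cone that `P` induces on the quotient by its units. -/
def quotientCone (P : AddSubmonoid G) : AddGroupCone (G ⧸ P.support) where
  toAddSubmonoid := P.map (QuotientAddGroup.mk' P.support)
  eq_zero_of_mem_of_neg_mem' := by
    rintro _ ⟨a, ha, rfl⟩ ⟨b, hb, hab⟩
    rw [← map_neg, QuotientAddGroup.mk'_eq_mk'] at hab
    obtain ⟨z, hz, hbz⟩ := hab
    have hna : -a ∈ P := hbz ▸ add_mem hb hz.1
    exact (QuotientAddGroup.eq_zero_iff a).mpr ⟨ha, hna⟩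

lemma mk_mem_quotientCone {P : AddSubmonoid G} {a : G} :
    (a : G ⧸ P.support) ∈ quotientCone P ↔ a ∈ P := by
  refine ⟨?_, fun ha => ⟨a, ha, rfl⟩⟩
  rintro ⟨b, hb, hab⟩
  rw [← QuotientAddGroup.mk'_apply, QuotientAddGroup.mk'_eq_mk'] at hab
  obtain ⟨z, hz, hbz⟩ := hab
  exact hbz ▸ add_mem hb hz.1

/-- Hölder's theorem for archimedean total preorders. -/
theorem exists_addMonoidHom_real_nonneg_iff (P : AddSubmonoid G) [HasMemOrNegMem P]
    (harch : ∀ r, -r ∉ P → ∀ a, ∃ k : ℕ, k • r + a ∈ P) :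
    ∃ φ : G →+ ℝ, ∀ a, 0 ≤ φ a ↔ a ∈ P := by
  classical
  have : HasMemOrNegMem (quotientCone P) := ⟨fun q => by
    obtain ⟨a, rfl⟩ := QuotientAddGroup.mk_surjective q
    rw [← QuotientAddGroup.mk_neg, mk_mem_quotientCone, mk_mem_quotientCone]
    exact mem_or_neg_mem P a⟩
  let _ : LinearOrder (G ⧸ P.support) := LinearOrder.mkOfAddGroupCone (quotientCone P)
  have : IsOrderedAddMonoid (G ⧸ P.support) := IsOrderedAddMonoid.mkOfCone (quotientCone P)
  have hle : ∀ a b : G, (a : G ⧸ P.support) ≤ b ↔ b - a ∈ P := fun a b =>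
    mk_mem_quotientCone (a := b - a)
  have : Archimedean (G ⧸ P.support) := ⟨fun x y hy => by
    obtain ⟨a, rfl⟩ := QuotientAddGroup.mk_surjective x
    obtain ⟨b, rfl⟩ := QuotientAddGroup.mk_surjective y
    have hb : -b ∉ P := fun h => hy.not_ge ((hle b 0).mpr (by rwa [zero_sub]))
    obtain ⟨k, hk⟩ := harch b hb (-a)
    exact ⟨k, (hle a (k • b)).mpr (by rwa [sub_eq_add_neg])⟩⟩
  obtain ⟨f, hf⟩ := Archimedean.exists_orderAddMonoidHom_real_injective (G ⧸ P.support)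
  refine ⟨(f : (G ⧸ P.support) →+ ℝ).comp (QuotientAddGroup.mk' P.support), fun a => ?_⟩
  have hmono : StrictMono f := f.monotone'.strictMono_of_injective hf
  have := hle 0 a
  rw [sub_zero] at this
  rw [← this, ← hmono.le_iff_le]
  simp

lemma exists_addMonoidHom_real_pos_iff {O : Set G} (h0 : 0 ∉ O)
    (hadd : ∀ a ∈ O, ∀ b ∈ O, a + b ∈ O) (hcompl : ∀ a ∉ O, ∀ b ∉ O, a + b ∉ O)
    (harch : ∀ r ∈ O, ∀ a, ∃ k : ℕ, k • r + a ∈ O) : ∃ φ : G →+ ℝ, ∀ r, r ∈ O ↔ 0 < φ r := by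
  have hneg : ∀ r ∈ O, -r ∉ O := fun r hr h => h0 (add_neg_cancel r ▸ hadd r hr _ h)
  let P : AddSubmonoid G :=
    { carrier := {a | -a ∉ O}
      add_mem' := fun {a b} ha hb => show -(a + b) ∉ O from neg_add a b ▸ hcompl _ ha _ hb
      zero_mem' := show -0 ∉ O by rwa [neg_zero] }
  have hP : ∀ {a}, a ∈ P ↔ -a ∉ O := Iff.rfl
  have : HasMemOrNegMem P := ⟨fun a => by
    rw [hP, hP, neg_neg]
    exact not_or_of_imp fun h ha => hneg a ha h⟩
  obtain ⟨φ, hφ⟩ := exists_addMonoidHom_real_nonneg_iff P fun r hr a => by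
    rw [hP, neg_neg, not_not] at hr
    exact (harch r hr a).imp fun k hk => hneg _ hk
  refine ⟨φ, fun r => ?_⟩
  rw [← not_le, ← neg_nonneg, ← map_neg, hφ, hP, neg_neg, not_not]

lemma exists_forall_eq_zsmul_or_forall_exists_lt {φ : G →+ ℝ} (hφ : φ ≠ 0) :
    (∃ β, 0 < φ β ∧ ∀ m, ∃ d : ℤ, φ m = d • φ β) ∨ ∀ c > 0, ∃ e, 0 < φ e ∧ φ e < c := by
  rcases φ.range.dense_or_cyclic with hdense | ⟨b, hb⟩
  · right
    intro c hc
    obtain ⟨_, ⟨e, rfl⟩, he⟩ := hdense.exists_between hc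
    exact ⟨e, he⟩
  · left
    have hmul : ∀ m, ∃ d : ℤ, d • b = φ m := fun m =>
      AddSubgroup.mem_closure_singleton.mp (hb ▸ ⟨m, rfl⟩)
    obtain ⟨β, hβ⟩ : b ∈ φ.range := hb ▸ AddSubgroup.mem_closure_singleton_self b
    have hb0 : b ≠ 0 := by
      rintro rfl
      exact hφ (AddMonoidHom.ext fun m => by obtain ⟨d, hd⟩ := hmul m; simpa using hd.symm)
    rcases hb0.lt_or_gt with hneg | hpos
    · refine ⟨-β, by rw [map_neg, hβ]; exact neg_pos.mpr hneg, fun m => ?_⟩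
      obtain ⟨d, hd⟩ := hmul m
      exact ⟨-d, by rw [map_neg, hβ, neg_zsmul, zsmul_neg, neg_neg, hd]⟩
    · refine ⟨β, hβ ▸ hpos, fun m => ?_⟩
      obtain ⟨d, hd⟩ := hmul m
      exact ⟨d, by rw [hβ, hd]⟩

end RealHeight

section LinearAlgebra

lemma linearIndependent_of_triangular {ι K W W' : Type*} [LinearOrder ι] [DivisionRing K]
    [AddCommGroup W] [Module K W] [AddCommGroup W'] [Module K W'] {x : ι → W}
    (f : ι → W →ₗ[K] W') (hlt : ∀ i j, i < j → f i (x j) = 0) (hdiag : ∀ i, f i (x i) ≠ 0) :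
    LinearIndependent K x := by
  rw [linearIndependent_iff']
  intro s g hg
  by_contra! hcon
  classical
  obtain ⟨i, hi, hmin⟩ := Finset.exists_min_image {i ∈ s | g i ≠ 0} id
    (hcon.imp fun i hi => Finset.mem_filter.mpr hi)
  rw [Finset.mem_filter] at hi
  have hzero : ∀ j ∈ s, j ≠ i → f i (g j • x j) = 0 := by
    intro j hj hji
    rw [map_smul]
    rcases eq_or_ne (g j) 0 with hgj | hgj
    · rw [hgj, zero_smul]
    · rw [hlt i j ((hmin j (Finset.mem_filter.mpr ⟨hj, hgj⟩)).lt_of_ne' hji), smul_zero]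
  have := congrArg (f i) hg
  rw [map_sum, map_zero, Finset.sum_eq_single_of_mem i hi.1 hzero, map_smul] at this
  exact smul_ne_zero hi.2 (hdiag i) this

lemma exists_forall_dotProduct_ne_zero {κ ι K : Type*} [Finite κ] [Fintype ι] [Field K] [Infinite K]
    {η : κ → ι → K} (hη : ∀ k, η k ≠ 0) : ∃ u, ∀ k, u ⬝ᵥ η k ≠ 0 := by
  classical
  refine Module.Dual.exists_forall_ne_zero_of_forall_exists
    (fun k => (dotProductBilin K K).flip (η k)) fun k => ?_
  obtain ⟨i, hi⟩ := Function.ne_iff.mp (hη k)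
  exact ⟨Pi.single i 1, by simpa using hi⟩

end LinearAlgebra

section Lattice

lemma exists_addMonoidHom_ne_zero_apply_eq_zero {ι : Type*} [Nontrivial ι] (α : ι → ℤ) :
    ∃ ω : (ι → ℤ) →+ ℤ, ω ≠ 0 ∧ ω α = 0 := by
  classical
  obtain ⟨i, j, hij⟩ := exists_pair_ne ι
  rcases eq_or_ne (α i) 0 with hi | hi
  · exact ⟨Pi.evalAddMonoidHom _ i, DFunLike.ne_iff.mpr ⟨Pi.single i 1, by simp⟩, hi⟩
  · refine ⟨α i • Pi.evalAddMonoidHom _ j - α j • Pi.evalAddMonoidHom _ i,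
      DFunLike.ne_iff.mpr ⟨Pi.single j 1, by simp [hij, hi]⟩, by simp [mul_comm]⟩

lemma closure_range_single_one (ι : Type*) [Finite ι] [DecidableEq ι] :
    AddSubgroup.closure (Set.range fun i : ι => (Pi.single i 1 : ι → ℤ)) = ⊤ := by
  cases nonempty_fintype ι
  have hspan : Submodule.span ℤ (Set.range fun i : ι => (Pi.single i 1 : ι → ℤ)) = ⊤ := by
    simp only [← Pi.basisFun_apply, Module.Basis.span_eq]
  rw [← Submodule.span_int_eq_addSubgroupClosure, hspan, Submodule.top_toAddSubgroup]

lemma isDirectSumDecomp_ker {n : ℕ} {φ : (Fin n → ℤ) →+ ℝ} {β : Fin n → ℤ} (hβ : 0 < φ β)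
    (h : ∀ m, ∃ d : ℤ, φ m = d • φ β) : IsDirectSumDecomp φ.ker β := by
  refine ⟨fun m => ?_, fun d hd => ?_⟩
  · obtain ⟨d, hd⟩ := h m
    exact ⟨m - d • β, by rw [AddMonoidHom.mem_ker, map_sub, map_zsmul, hd, sub_self], d,
      (sub_add_cancel _ _).symm⟩
  · rw [AddMonoidHom.mem_ker, map_zsmul] at hd
    exact (smul_eq_zero.mp hd).resolve_right hβ.ne'

lemma pos_of_posDeg_ker {n : ℕ} {φ : (Fin n → ℤ) →+ ℝ} {β r : Fin n → ℤ} (hβ : 0 < φ β)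
    (hr : posDeg φ.ker β r) : 0 < φ r := by
  obtain ⟨a, ha, d, hd, rfl⟩ := hr
  rw [map_add, AddMonoidHom.mem_ker.mp ha, zero_add, map_zsmul]
  exact zsmul_pos hβ (by lia)

/-- The inclusion of the degree lattice `ℤⁿ` in the weight space `ℂⁿ`. -/
def toWeight {n : ℕ} : (Fin n → ℤ) →+ (Fin n → ℂ) := (Int.castAddHom ℂ).compLeft (Fin n)

lemma toWeight_apply {n : ℕ} (m : Fin n → ℤ) (i : Fin n) : toWeight m i = m i := rfl

lemma toWeight_injective {n : ℕ} : Function.Injective (toWeight (n := n)) :=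
  Int.cast_injective.comp_left

/-- Two vectors parallel to `η` are integrally proportional, so those of positive height stay away
from height zero. -/
lemma exists_pos_forall_lt_exists_mul_ne {ι : Type*} (φ : (ι → ℤ) →+ ℝ) {η : ι → ℂ} (hη : η ≠ 0) :
    ∃ c > 0, ∀ e, 0 < φ e → φ e < c → ∃ i j, e i * η j ≠ e j * η i := by
  obtain ⟨l, hl⟩ := Function.ne_iff.mp hη
  by_cases hpar : ∃ r, 0 < φ r ∧ ∀ i j, r i * η j = r j * η i
  · obtain ⟨r, hr, hrη⟩ := hpar
    have hne : ∀ e, 0 < φ e → (∀ i j, e i * η j = e j * η i) → e l ≠ 0 := by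
      intro e he heη hel
      refine he.ne' ?_
      have : e = 0 := funext fun j => by
        simpa [hel, show η l ≠ 0 from hl] using (heη j l)
      rw [this, map_zero]
    have hrl : (0 : ℝ) < |(r l : ℝ)| := by simpa using hne r hr hrη
    refine ⟨φ r / |(r l : ℝ)|, div_pos hr hrl, fun e he hlt => ?_⟩
    by_contra! heη
    have hprop : r l • e = e l • r := funext fun j => by
      have : ((r l : ℂ) * e j) * η l = (e l * r j) * η l := by
        linear_combination (r l : ℂ) * heη j l - (e l : ℂ) * hrη j l
      exact_mod_cast mul_right_cancel₀ hl this
    have habs : |(r l : ℝ)| * φ e = |(e l : ℝ)| * φ r := by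
      rw [← abs_of_pos he, ← abs_of_pos hr, ← abs_mul, ← abs_mul, ← zsmul_eq_mul, ← zsmul_eq_mul,
        ← map_zsmul, ← map_zsmul, hprop]
    have hel : (1 : ℝ) ≤ |(e l : ℝ)| := by exact_mod_cast Int.one_le_abs (hne e he heη)
    rw [lt_div_iff₀' hrl, habs] at hlt
    exact hlt.not_ge (le_mul_of_one_le_left hr.le hel)
  · push Not at hpar
    exact ⟨1, one_pos, fun e he _ => hpar e he⟩

lemma eventually_exists_dotProduct_eq_zero {n : ℕ} {κ : Type*} [Finite κ] (φ : (Fin n → ℤ) →+ ℝ)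
    {η : κ → Fin n → ℂ} (hη : ∀ k, η k ≠ 0) : ∀ᶠ t in 𝓝[>] (0 : ℝ), ∀ e, φ e = t →
      ∃ w, w ⬝ᵥ toWeight e = 0 ∧ ∀ k, w ⬝ᵥ η k ≠ 0 := by
  have hsingle : ∀ᶠ t in 𝓝[>] (0 : ℝ), ∀ k, ∀ e, φ e = t →
      ∃ w, w ⬝ᵥ toWeight e = 0 ∧ w ⬝ᵥ η k ≠ 0 := by
    refine eventually_all.mpr fun k => (nhdsGT_basis 0).eventually_iff.mpr ?_
    obtain ⟨c, hc, hne⟩ := exists_pos_forall_lt_exists_mul_ne φ (hη k)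
    refine ⟨c, hc, fun t ht e he => ?_⟩
    obtain ⟨i, j, hij⟩ := hne e (he ▸ ht.1) (he ▸ ht.2)
    refine ⟨(e i : ℂ) • Pi.single j 1 - (e j : ℂ) • Pi.single i 1, ?_, ?_⟩
    · simp [sub_dotProduct, toWeight_apply, mul_comm]
    · simpa [sub_dotProduct, sub_eq_zero] using hij
  filter_upwards [hsingle] with t ht e he
  let pairing := (dotProductBilin ℂ ℂ (m := Fin n) (A := ℂ)).flip
  exact Module.Dual.exists_forall_mem_ne_zero_of_forall_exists
    (LinearMap.ker (pairing (toWeight e))) (fun k => pairing (η k)) fun k => ht k e he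

end Lattice

namespace ExtWittRep

variable {n : ℕ} {S V : Type*} [AddCommGroup S] [Module ℂ S] [AddCommGroup V] [Module ℂ V]
  {ρ : ExtWittRep n S ℂ V} {lam : Fin n → ℂ} {c : S →ₗ[ℂ] ℂ}

section Action

variable (ρ)

/-- The action of the part of degree `r`, identified with `ℂⁿ × S`: the pair `(u, s)` stands for
`D(u,r) + s ⊗ tʳ`. -/
def act (r : Fin n → ℤ) : (Fin n → ℂ) × S →ₗ[ℂ] Module.End ℂ V where
  toFun x := ρ.D x.1 r 1 + ρ.E x.2 r 1
  map_add' x y := by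
    rw [Prod.fst_add, Prod.snd_add, ρ.D_add_u, ρ.E_add_s, add_add_add_comm]
  map_smul' c x := by
    rw [Prod.smul_fst, Prod.smul_snd, ρ.D_smul_u, ρ.E_smul_s, ← smul_add, RingHom.id_apply]

lemma E_zero_left (r : Fin n → ℤ) (b : ℂ) : ρ.E 0 r b = 0 := by
  simpa using ρ.E_smul_s 0 0 r b

lemma D_zero_left (r : Fin n → ℤ) (b : ℂ) : ρ.D 0 r b = 0 := by
  simpa using ρ.D_smul_u 0 0 r b

lemma D_eq_act (u : Fin n → ℂ) (r : Fin n → ℤ) (b : ℂ) : ρ.D u r b = ρ.act r (b • u, 0) := by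
  rw [show ρ.act r (b • u, 0) = ρ.D (b • u) r 1 + ρ.E 0 r 1 from rfl, E_zero_left, add_zero,
    ρ.D_smul_u, ← ρ.D_smul_b, smul_eq_mul, mul_one]

lemma E_eq_act (s : S) (r : Fin n → ℤ) (b : ℂ) : ρ.E s r b = ρ.act r (0, b • s) := by
  rw [show ρ.act r (0, b • s) = ρ.D 0 r 1 + ρ.E (b • s) r 1 from rfl, D_zero_left, zero_add,
    ρ.E_smul_s, ← ρ.E_smul_b, smul_eq_mul, mul_one]

lemma lie_act_act (r s : Fin n → ℤ) (x y : (Fin n → ℂ) × S) :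
    ⁅ρ.act r x, ρ.act s y⁆ =
      ρ.act (r + s) ((x.1 ⬝ᵥ toWeight s) • y - (y.1 ⬝ᵥ toWeight r) • x) := by
  have hx : pairC x.1 s = x.1 ⬝ᵥ toWeight s := rfl
  have hy : pairC y.1 r = y.1 ⬝ᵥ toWeight r := rfl
  calc ⁅ρ.D x.1 r 1 + ρ.E x.2 r 1, ρ.D y.1 s 1 + ρ.E y.2 s 1⁆
      = ⁅ρ.D x.1 r 1, ρ.D y.1 s 1⁆ + ⁅ρ.D x.1 r 1, ρ.E y.2 s 1⁆
          - ⁅ρ.D y.1 s 1, ρ.E x.2 r 1⁆ + ⁅ρ.E x.2 r 1, ρ.E y.2 s 1⁆ := by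
        simp only [Ring.lie_def, mul_add, add_mul]
        abel
    _ = ρ.D ((x.1 ⬝ᵥ toWeight s) • y.1 - (y.1 ⬝ᵥ toWeight r) • x.1) (r + s) 1 +
          ρ.E ((x.1 ⬝ᵥ toWeight s) • y.2 - (y.1 ⬝ᵥ toWeight r) • x.2) (r + s) 1 := by
        rw [ρ.comm_DD, ρ.comm_DE, ρ.comm_DE, ρ.comm_EE, mul_one, hx, hy, add_comm s r, add_zero,
          add_sub_assoc, sub_eq_add_neg _ ((y.1 ⬝ᵥ _) • x.2), ρ.E_add_s, ← neg_smul, ρ.E_smul_s,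
          ρ.E_smul_s, neg_smul, ← sub_eq_add_neg]

lemma act_act (r s : Fin n → ℤ) (x y : (Fin n → ℂ) × S) (v : V) :
    ρ.act r x (ρ.act s y v) = ρ.act s y (ρ.act r x v) +
      ρ.act (r + s) ((x.1 ⬝ᵥ toWeight s) • y - (y.1 ⬝ᵥ toWeight r) • x) v := by
  rw [← lie_act_act, Ring.lie_def, LinearMap.sub_apply]
  exact (add_sub_cancel _ _).symm

variable {ρ}

lemma invariantK_iff {M : AddSubgroup (Fin n → ℤ)} {U : Submodule ℂ V} :
    ρ.InvariantK M U ↔ ∀ r ∈ M, ∀ x, ∀ v ∈ U, ρ.act r x v ∈ U := by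
  refine ⟨fun h r hr x v hv => add_mem (h.1 _ r hr _ v hv) (h.2 _ r hr _ v hv), fun h => ⟨?_, ?_⟩⟩
  · intro u r hr b v hv
    exact D_eq_act ρ u r b ▸ h r hr _ v hv
  · intro s r hr b v hv
    exact E_eq_act ρ s r b ▸ h r hr _ v hv

lemma invariant_iff {U : Submodule ℂ V} :
    ρ.Invariant U ↔ ∀ r x, ∀ v ∈ U, ρ.act r x v ∈ U := by
  simpa [Invariant, InvariantK] using invariantK_iff (ρ := ρ) (M := ⊤) (U := U)

end Action

section Weights

lemma mem_weightSpace_iff {v : V} :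
    v ∈ ρ.weightSpace lam c ↔ ∀ x, ρ.act 0 x v = (x.1 ⬝ᵥ lam + c x.2) • v := by
  refine ⟨fun h x => ?_, fun h => ⟨fun u => ?_, fun s => ?_⟩⟩
  · rw [add_smul]
    exact congrArg₂ (· + ·) (h.1 x.1) (h.2 x.2)
  · have hu : u ⬝ᵥ lam = pairCC u lam := rfl
    rw [D_eq_act, h, one_smul, map_zero, add_zero, hu]
  · rw [E_eq_act, h, one_smul, zero_dotProduct, zero_add]

variable (ρ lam c) in
/-- The weight space of weight `lam + m`: the homogeneous part of degree `m` of the component of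
`V` supported on the coset `lam + ℤⁿ`. -/
def grade (m : Fin n → ℤ) : Submodule ℂ V := ρ.weightSpace (lam + toWeight m) c

lemma mem_grade_iff {m : Fin n → ℤ} {v : V} : v ∈ ρ.grade lam c m ↔
    ∀ x, ρ.act 0 x v = (x.1 ⬝ᵥ (lam + toWeight m) + c x.2) • v := mem_weightSpace_iff

lemma act_mem_grade {m : Fin n → ℤ} {v : V} (hv : v ∈ ρ.grade lam c m) (r : Fin n → ℤ)
    (x : (Fin n → ℂ) × S) : ρ.act r x v ∈ ρ.grade lam c (m + r) := by
  rw [mem_grade_iff] at hv ⊢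
  intro y
  rw [act_act, hv, map_smul, zero_add, map_zero, dotProduct_zero, zero_smul, sub_zero, map_smul,
    LinearMap.smul_apply, ← add_smul, map_add, ← add_assoc, dotProduct_add y.1 (lam + _)]
  ring_nf

variable (ρ) in
lemma iSupIndep_weightSpace :
    iSupIndep fun p : (Fin n → ℂ) × (S →ₗ[ℂ] ℂ) => ρ.weightSpace p.1 p.2 := by
  have hcomm : ∀ x y, Commute (ρ.act 0 x) (ρ.act 0 y) := fun x y => by
    rw [commute_iff_lie_eq, lie_act_act, map_zero, dotProduct_zero, dotProduct_zero, zero_smul,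
      zero_smul, sub_zero, map_zero]
  have hind := Module.End.independent_iInf_maxGenEigenspace_of_forall_mapsTo (ρ.act 0)
    fun x y μ => Module.End.mapsTo_maxGenEigenspace_of_comm (hcomm y x) μ
  let χ : (Fin n → ℂ) × (S →ₗ[ℂ] ℂ) → (Fin n → ℂ) × S → ℂ := fun p x => x.1 ⬝ᵥ p.1 + p.2 x.2
  have hχ : Function.Injective χ := by
    rintro ⟨l, c⟩ ⟨l', c'⟩ h
    refine Prod.ext (dotProduct_eq _ _ fun u => ?_) (LinearMap.ext fun s => ?_)
    · simpa [χ, dotProduct_comm _ u] using congrFun h (u, 0)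
    · simpa [χ] using congrFun h (0, s)
  refine (hind.comp hχ).mono fun p v hv => ?_
  simp only [Function.comp, Submodule.mem_iInf]
  exact fun x => Module.End.genEigenspace_le_maximal _ _ 1
    (Module.End.mem_eigenspace_iff.mpr (mem_weightSpace_iff.mp hv x))

lemma iSupIndep_grade : iSupIndep (ρ.grade lam c) :=
  ρ.iSupIndep_weightSpace.comp (f := fun m => (lam + toWeight m, c)) fun _ _ h =>
    toWeight_injective (add_left_cancel (congrArg Prod.fst h))

lemma act_mem_of_mem_iSup_grade {A : Set (Fin n → ℤ)} {U : Submodule ℂ V} {r : Fin n → ℤ}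
    {x : (Fin n → ℂ) × S} (h : ∀ m ∈ A, ∀ v ∈ ρ.grade lam c m, ρ.act r x v ∈ U) {v : V}
    (hv : v ∈ ⨆ m ∈ A, ρ.grade lam c m) : ρ.act r x v ∈ U := by
  have : (⨆ m ∈ A, ρ.grade lam c m) ≤ U.comap (ρ.act r x) := iSup₂_le h
  exact this hv

lemma iSup_grade_eq_top (hirr : ρ.IsIrreducible) {m : Fin n → ℤ} (hm : ρ.grade lam c m ≠ ⊥) :
    ⨆ m, ρ.grade lam c m = ⊤ := by
  refine (hirr.2 _ (invariant_iff.mpr fun r x v hv => ?_)).resolve_left fun h => hm ?_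
  · have : (⨆ m, ρ.grade lam c m) ≤ (⨆ m, ρ.grade lam c m).comap (ρ.act r x) :=
      iSup_le fun m w hw => le_iSup (ρ.grade lam c) (m + r) (act_mem_grade hw r x)
    exact this hv
  · exact eq_bot_iff.mpr (h ▸ le_iSup (ρ.grade lam c) m)

lemma exists_grade_zero_ne_bot (hw : ρ.IsWeightModule) (hirr : ρ.IsIrreducible) :
    ∃ lam c, ρ.grade lam c 0 ≠ ⊥ := by
  by_contra! h
  obtain ⟨v, hv⟩ := hirr.1
  have hbot : (⨆ p : (Fin n → ℂ) × (S →ₗ[ℂ] ℂ), ρ.weightSpace p.1 p.2) = ⊥ :=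
    iSup_eq_bot.mpr fun p => by simpa [grade] using h p.1 p.2
  rw [hw] at hbot
  exact hv ((Submodule.mem_bot ℂ).mp (hbot ▸ Submodule.mem_top))

lemma exists_lt_finrank_grade (hhc : ρ.HarishChandra) (hnub : ¬ρ.UniformlyBounded)
    (htop : ⨆ m, ρ.grade lam c m = ⊤) (N : ℕ) : ∃ m, N < Module.finrank ℂ (ρ.grade lam c m) := by
  by_contra! h
  refine hnub ⟨N, fun l d => ?_⟩
  have := hhc.2 l d
  by_cases hp : ∃ m, (lam + toWeight m, c) = (l, d)
  · obtain ⟨m, hm⟩ := hp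
    obtain ⟨rfl, rfl⟩ := Prod.ext_iff.mp hm
    rw [← Module.finrank_eq_rank]
    exact_mod_cast h m
  · have hdis := ρ.iSupIndep_weightSpace (l, d)
    have hle : (⨆ m, ρ.grade lam c m) ≤ ⨆ (q) (_ : q ≠ (l, d)), ρ.weightSpace q.1 q.2 :=
      iSup_le fun m => le_iSup₂_of_le (lam + toWeight m, c) (fun h => hp ⟨m, h⟩) le_rfl
    rw [htop, top_le_iff] at hle
    rw [hle, disjoint_top] at hdis
    have hbot : ρ.weightSpace l d = ⊥ := hdis
    rw [hbot, rank_bot]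
    exact zero_le

end Weights

section AnnihilatedDegrees

variable (ρ) in
/-- The degrees `r` such that the whole part of degree `r` annihilates `v`. -/
def annDegrees (v : V) : Set (Fin n → ℤ) := {r | ∀ x, ρ.act r x v = 0}

/-- The parts of two distinct degrees generate the part whose degree is their sum. -/
lemma distinctSumClosed_annDegrees (v : V) : DistinctSumClosed (ρ.annDegrees v) := by
  intro a ha b hb hab
  have hbracket : ∀ x y : (Fin n → ℂ) × S,
      ρ.act (a + b) ((x.1 ⬝ᵥ toWeight b) • y - (y.1 ⬝ᵥ toWeight a) • x) v = 0 := fun x y => by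
    rw [← lie_act_act, Ring.lie_def, LinearMap.sub_apply, Module.End.mul_apply,
      Module.End.mul_apply, ha, hb, map_zero, map_zero, sub_zero]
  rcases eq_or_ne b 0 with rfl | hb0
  · rwa [add_zero]
  obtain ⟨p, hp⟩ := exists_forall_dotProduct_ne_zero (η := ![toWeight b, toWeight (b - a)])
    (Fin.forall_fin_two.mpr ⟨(map_ne_zero_iff _ toWeight_injective).mpr hb0,
      (map_ne_zero_iff _ toWeight_injective).mpr (sub_ne_zero.mpr hab.symm)⟩)
  have hp₀ : p ⬝ᵥ toWeight b ≠ 0 := hp 0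
  have hp₁ : p ⬝ᵥ toWeight (b - a) ≠ 0 := hp 1
  have hpv : ρ.act (a + b) (p, 0) v = 0 := by
    have h := hbracket (p, 0) (p, 0)
    rw [← sub_smul, ← dotProduct_sub, ← map_sub, map_smul] at h
    exact (smul_eq_zero.mp h).resolve_left hp₁
  intro y
  have h := hbracket (p, 0) y
  rw [map_sub, map_smul, map_smul, LinearMap.sub_apply, LinearMap.smul_apply, LinearMap.smul_apply,
    hpv, smul_zero, sub_zero] at h
  exact (smul_eq_zero.mp h).resolve_left hp₀

lemma mem_annDegrees_act {v : V} {r s : Fin n → ℤ} (hr : r ∈ ρ.annDegrees v)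
    (hrs : r + s ∈ ρ.annDegrees v) (y : (Fin n → ℂ) × S) : r ∈ ρ.annDegrees (ρ.act s y v) :=
  fun x => by rw [act_act, hr, map_zero, hrs, add_zero]

lemma mem_annDegrees_of_grade_add_eq_bot {m r : Fin n → ℤ} {v : V} (hv : v ∈ ρ.grade lam c m)
    (h : ρ.grade lam c (m + r) = ⊥) : r ∈ ρ.annDegrees v := fun x => by
  simpa [h] using act_mem_grade hv r x

lemma exists_ne_zero_forall_mem_annDegrees [FiniteDimensional ℂ S] (hhc : ρ.HarishChandra)
    (hnub : ¬ρ.UniformlyBounded) (htop : ⨆ m, ρ.grade lam c m = ⊤) (F : Finset (Fin n → ℤ)) :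
    ∃ m ∉ F, ∃ v ≠ 0, ∀ t ∈ F, t - m ∈ ρ.annDegrees v := by
  have hfin (m) : FiniteDimensional ℂ (ρ.grade lam c m) := hhc.2 _ _
  let W := (t : F) → ((Fin n → ℂ) × S →ₗ[ℂ] ρ.grade lam c t)
  obtain ⟨m, hm⟩ := exists_lt_finrank_grade hhc hnub htop
    (Module.finrank ℂ W + ∑ t ∈ F, Module.finrank ℂ (ρ.grade lam c t))
  have hmF : m ∉ F := fun h => by
    have := Finset.single_le_sum (f := fun t => Module.finrank ℂ (ρ.grade lam c t))
      (fun _ _ => Nat.zero_le _) h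
    lia
  have hact (t : F) (v : ρ.grade lam c m) (x) : ρ.act (t - m) x v ∈ ρ.grade lam c t := by
    simpa using act_mem_grade v.2 (t - m) x
  let T : ρ.grade lam c m →ₗ[ℂ] W := LinearMap.pi fun t => LinearMap.mk₂ ℂ
    (fun v x => ⟨ρ.act (t - m) x v, hact t v x⟩)
    (fun _ _ _ => Subtype.ext (by simp)) (fun _ _ _ => Subtype.ext (by simp))
    (fun _ _ _ => Subtype.ext (by simp)) (fun _ _ _ => Subtype.ext (by simp))
  obtain ⟨v, hv, hv0⟩ := Submodule.exists_mem_ne_zero_of_ne_bot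
    (LinearMap.ker_ne_bot_of_finrank_lt (f := T) ((Nat.le_add_right _ _).trans_lt hm))
  refine ⟨m, hmF, v, by simpa using hv0, fun t ht x => ?_⟩
  exact congrArg Subtype.val (LinearMap.congr_fun (congrFun (LinearMap.mem_ker.mp hv) ⟨t, ht⟩) x)

end AnnihilatedDegrees

section NilCone

variable (ρ) in
/-- The directions `r` such that, from any degree `a` on, the parts of degree `a + k r` eventually
annihilate any given vector. -/
def nilCone : Set (Fin n → ℤ) := {r | ∀ v, r ∈ recessionCone (ρ.annDegrees v)}

lemma mem_nilCone_of_ne_zero (hirr : ρ.IsIrreducible) {r : Fin n → ℤ} {v : V} (hv : v ≠ 0)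
    (hr : r ∈ recessionCone (ρ.annDegrees v)) : r ∈ ρ.nilCone := by
  let U : Submodule ℂ V :=
    { carrier := {v | r ∈ recessionCone (ρ.annDegrees v)}
      add_mem' := fun hv hw a => by
        filter_upwards [hv a, hw a] with k hkv hkw x
        rw [map_add, hkv, hkw, add_zero]
      zero_mem' := fun a => Eventually.of_forall fun k x => map_zero _
      smul_mem' := fun t v hv a => by
        filter_upwards [hv a] with k hkv x
        rw [map_smul, hkv, smul_zero] }
  have hU : U = ⊤ := (hirr.2 U (invariant_iff.mpr fun s y v hv a => ?_)).resolve_left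
    (Submodule.ne_bot_iff U |>.mpr ⟨v, hr, hv⟩)
  · exact fun w => (hU ▸ Submodule.mem_top : w ∈ U)
  · filter_upwards [hv a, hv (a + s)] with k hk hks
    exact mem_annDegrees_act hk (by rwa [add_assoc]) y

lemma zero_notMem_nilCone (hirr : ρ.IsIrreducible) (hnub : ¬ρ.UniformlyBounded) :
    0 ∉ ρ.nilCone := by
  intro h0
  have htriv : ∀ r x v, ρ.act r x v = 0 := fun r x v => by
    obtain ⟨k, hk⟩ := (h0 v r).exists
    simpa using hk x
  obtain ⟨v, hv⟩ := hirr.1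
  have htop : Submodule.span ℂ {v} = ⊤ := by
    refine (hirr.2 _ (invariant_iff.mpr fun r x w _ => ?_)).resolve_left ?_
    · rw [htriv]
      exact zero_mem _
    · rwa [Submodule.span_singleton_eq_bot]
  refine hnub ⟨1, fun lam c => (Submodule.rank_le _).trans ?_⟩
  rw [← rank_top, ← htop]
  exact (rank_span_le _).trans (by simp)

lemma add_mem_nilCone {r r' : Fin n → ℤ} (hr : r ∈ ρ.nilCone) (hr' : r' ∈ ρ.nilCone) :
    r + r' ∈ ρ.nilCone := fun v =>
  (distinctSumClosed_annDegrees v).add_mem_recessionCone (hr v) (hr' v)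

lemma add_mem_nilCone_of_mem_annDegrees (hn : 2 ≤ n) (hirr : ρ.IsIrreducible) {r α : Fin n → ℤ}
    (hr : r ∈ ρ.nilCone) {v : V} (hv : v ≠ 0) (hα : α ∈ ρ.annDegrees v) : r + α ∈ ρ.nilCone := by
  have := Fin.nontrivial_iff_two_le.mpr hn
  obtain ⟨ω, hω, hωα⟩ := exists_addMonoidHom_ne_zero_apply_eq_zero α
  exact mem_nilCone_of_ne_zero hirr hv
    ((distinctSumClosed_annDegrees v).add_mem_recessionCone_of_mem (hr v) hα hω hωα)

lemma exists_nsmul_add_mem_nilCone (hn : 2 ≤ n) (hirr : ρ.IsIrreducible) {r : Fin n → ℤ}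
    (hr : r ∈ ρ.nilCone) (a : Fin n → ℤ) : ∃ k : ℕ, k • r + a ∈ ρ.nilCone := by
  obtain ⟨v, hv⟩ := hirr.1
  obtain ⟨k, hk⟩ := (hr v a).exists
  refine ⟨k + 1, ?_⟩
  rw [succ_nsmul', add_assoc]
  exact add_mem_nilCone_of_mem_annDegrees hn hirr hr hv hk

lemma mem_nilCone_of_nsmul_mem {q : ℕ} (hq : q ≠ 0) {r : Fin n → ℤ} (hr : q • r ∈ ρ.nilCone) :
    r ∈ ρ.nilCone := fun v => mem_recessionCone_of_nsmul_mem hq (hr v)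

lemma nilCone_nonempty [FiniteDimensional ℂ S] (hn : 2 ≤ n) (hhc : ρ.HarishChandra)
    (hirr : ρ.IsIrreducible) (hnub : ¬ρ.UniformlyBounded) : ρ.nilCone.Nonempty := by
  have : NeZero n := ⟨by lia⟩
  obtain ⟨lam, c, h0⟩ := exists_grade_zero_ne_bot hhc.1 hirr
  let e : Fin n → Fin n → ℤ := fun i => Pi.single i 1
  let F : Finset (Fin n → ℤ) :=
    {0} ∪ (Finset.univ.image e ∪ Finset.univ.image fun i => -e i)
  obtain ⟨m, hm, v, hv, hann⟩ :=
    exists_ne_zero_forall_mem_annDegrees hhc hnub (iSup_grade_eq_top hirr h0) F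
  have hF0 : 0 ∈ F := by simp [F]
  have hFe (i) : e i ∈ F := by simp [F]
  have hFneg (i) : -e i ∈ F := by simp [F]
  refine ⟨-m, mem_nilCone_of_ne_zero hirr hv <| (distinctSumClosed_annDegrees v)
    |>.mem_recessionCone_of_closure_eq_top ?_ ?_ (closure_range_single_one (Fin n))
      (Set.range_nonempty _) ?_ ?_ ?_⟩
  · exact neg_ne_zero.mpr fun h => hm (h ▸ hF0)
  · simpa using hann 0 hF0
  · rintro _ ⟨i, rfl⟩
    simpa [sub_eq_neg_add] using hann _ (hFe i)
  · rintro _ ⟨i, rfl⟩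
    simpa [sub_eq_neg_add, add_comm] using hann _ (hFneg i)
  · rintro _ ⟨i, rfl⟩ l hl
    have hli : l * -m i = 1 := by simpa using congrFun hl i
    rcases Int.isUnit_iff.mp (IsUnit.of_mul_eq_one _ hli) with rfl | rfl
    · exact hm (by rw [← neg_neg m, ← one_zsmul (-m), hl]; exact hFneg i)
    · exact hm (by rw [← neg_neg m, ← neg_one_zsmul (-m), hl]; exact hFe i)

end NilCone

section EventualVanishing

lemma eventually_forall_mem_annDegrees {r : Fin n → ℤ} (hr : r ∈ ρ.nilCone) (a : Fin n → ℤ)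
    {U : Submodule ℂ V} (hU : U.FG) : ∀ᶠ k : ℕ in atTop, ∀ v ∈ U, k • r + a ∈ ρ.annDegrees v := by
  obtain ⟨s, rfl⟩ := hU
  filter_upwards [(eventually_all_finset s).mpr fun v _ => hr v a] with k hk v hv x
  exact (Submodule.span_le (p := LinearMap.ker (ρ.act (k • r + a) x))).mpr
    (fun w hw => hk w hw x) hv

lemma act_zsmul_act_zsmul (u : Fin n → ℂ) (r : Fin n → ℤ) (i j : ℤ) (v : V) :
    ρ.act (i • r) (u, 0) (ρ.act (j • r) (u, 0) v) = ρ.act (j • r) (u, 0) (ρ.act (i • r) (u, 0) v) +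
      ((j - i) * u ⬝ᵥ toWeight r) • ρ.act ((i + j) • r) (u, 0) v := by
  rw [act_act, ← sub_smul, ← add_smul, map_smul, LinearMap.smul_apply, map_zsmul, map_zsmul,
    dotProduct_smul, dotProduct_smul, ← sub_smul, ← Int.cast_sub, ← zsmul_eq_mul]

/-- Along the line `ℤ r` the operators `d j = D(u, j r)` form a Witt algebra. As `d (j + k)` kills
`d (-k) v`, which lives in the finite dimensional space of degree `m`, the bracket
`[d (j + k), d (-k)]` shows that `d (j + k) v = 0` forces `d j v = 0`. -/
lemma eventually_grade_add_nsmul_eq_bot (hhc : ρ.HarishChandra) {r : Fin n → ℤ} (hr0 : r ≠ 0)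
    (hr : r ∈ ρ.nilCone) (m : Fin n → ℤ) :
    ∀ᶠ k : ℕ in atTop, ρ.grade lam c (m + k • r) = ⊥ := by
  obtain ⟨u, hu⟩ := exists_forall_dotProduct_ne_zero (κ := Unit) (η := fun _ => toWeight r)
    fun _ => (map_ne_zero_iff _ toWeight_injective).mpr hr0
  replace hu : u ⬝ᵥ toWeight r ≠ 0 := hu ()
  have hfg : (ρ.grade lam c m).FG := Module.Finite.iff_fg.mp (hhc.2 _ _)
  obtain ⟨K, hK⟩ := eventually_atTop.mp (eventually_forall_mem_annDegrees hr 0 hfg)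
  filter_upwards [eventually_nsmul_add_ne hu (u ⬝ᵥ (lam + toWeight m)) 0,
    eventually_ge_atTop K, eventually_gt_atTop 0] with k hne hKk hk
  refine (Submodule.eq_bot_iff _).mpr fun v hv => ?_
  have hdescend (j : ℕ) (hj : ρ.act ((j + k : ℤ) • r) (u, 0) v = 0) :
      ρ.act ((j : ℤ) • r) (u, 0) v = 0 := by
    have hmem : ρ.act ((-k : ℤ) • r) (u, 0) v ∈ ρ.grade lam c m := by
      simpa using act_mem_grade hv ((-k : ℤ) • r) (u, 0)
    have hkill := hK (j + k) (by lia) _ hmem (u, 0)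
    rw [add_zero, ← natCast_zsmul, Nat.cast_add, act_zsmul_act_zsmul, hj, map_zero, zero_add,
      add_neg_cancel_right] at hkill
    refine (smul_eq_zero.mp hkill).resolve_left (mul_ne_zero ?_ hu)
    exact_mod_cast (by lia : (-k - (j + k) : ℤ) ≠ 0)
  obtain ⟨J, hJ⟩ := eventually_atTop.mp (hr v 0)
  have hzero (i : ℕ) (hi : ρ.act ((i * k : ℕ) • r) (u, 0) v = 0) : ρ.act 0 (u, 0) v = 0 := by
    induction i with
    | zero => simpa using hi
    | succ i ih =>
      refine ih ?_
      rw [← natCast_zsmul] at hi ⊢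
      exact hdescend _ (by rwa [← Nat.cast_add, ← add_one_mul])
  have hJk := hzero J (by simpa using hJ (J * k) (Nat.le_mul_of_pos_right J hk) (u, 0))
  rw [mem_grade_iff.mp hv, map_zero, add_zero] at hJk
  refine (smul_eq_zero.mp hJk).resolve_left fun h => hne ?_
  rwa [map_add, map_nsmul, ← add_assoc, dotProduct_add, dotProduct_smul, add_comm] at h

end EventualVanishing

section Height

lemma grade_add_ne_bot {m α : Fin n → ℤ} (hm : ρ.grade lam c m ≠ ⊥)
    (hα : ∀ v ≠ 0, α ∉ ρ.annDegrees v) : ρ.grade lam c (m + α) ≠ ⊥ := by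
  obtain ⟨v, hv, hv0⟩ := Submodule.exists_mem_ne_zero_of_ne_bot hm
  exact fun h => hα v hv0 (mem_annDegrees_of_grade_add_eq_bot hv h)

/-- The two degrees `3 α - (α + β)` and `3 β - (α + β)` have sum `α + β` and annihilate no vector,
so translation by `α + β` preserves the set of weights. -/
lemma add_notMem_nilCone (hn : 2 ≤ n) (hhc : ρ.HarishChandra) (hirr : ρ.IsIrreducible)
    (hnub : ¬ρ.UniformlyBounded) {α β : Fin n → ℤ} (hα : α ∉ ρ.nilCone) (hβ : β ∉ ρ.nilCone) :
    α + β ∉ ρ.nilCone := by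
  intro hr
  obtain ⟨lam, c, h0⟩ := exists_grade_zero_ne_bot hhc.1 hirr
  have hann : ∀ a ∉ ρ.nilCone, ∀ v ≠ 0, 3 • a - (α + β) ∉ ρ.annDegrees v := fun a ha v hv h => by
    have := add_mem_nilCone_of_mem_annDegrees hn hirr hr hv h
    rw [add_sub_cancel] at this
    exact ha (mem_nilCone_of_nsmul_mem three_ne_zero this)
  have hstep : ∀ m, ρ.grade lam c m ≠ ⊥ → ρ.grade lam c (m + (α + β)) ≠ ⊥ := fun m hm => by
    convert grade_add_ne_bot (grade_add_ne_bot hm (hann α hα)) (hann β hβ) using 2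
    abel
  have hall (k : ℕ) : ρ.grade lam c (0 + k • (α + β)) ≠ ⊥ := by
    induction k with
    | zero => simpa using h0
    | succ k ih =>
      rw [succ_nsmul, ← add_assoc]
      exact hstep _ ih
  have hr0 : α + β ≠ 0 := fun h => zero_notMem_nilCone hirr hnub (h ▸ hr)
  obtain ⟨k, hk⟩ := (eventually_grade_add_nsmul_eq_bot hhc hr0 hr 0).exists
  exact hall k hk

variable (ρ) in
/-- A real linear form on the degrees whose open positive half space is the cone of eventually
annihilating directions. -/
def IsHeight (φ : (Fin n → ℤ) →+ ℝ) : Prop := ∀ r, r ∈ ρ.nilCone ↔ 0 < φ r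

lemma exists_isHeight_ne_zero [FiniteDimensional ℂ S] (hn : 2 ≤ n) (hhc : ρ.HarishChandra)
    (hirr : ρ.IsIrreducible) (hnub : ¬ρ.UniformlyBounded) : ∃ φ, ρ.IsHeight φ ∧ φ ≠ 0 := by
  obtain ⟨φ, hφ⟩ := exists_addMonoidHom_real_pos_iff (zero_notMem_nilCone hirr hnub)
    (fun _ ha _ hb => add_mem_nilCone ha hb)
    (fun _ ha _ hb => add_notMem_nilCone hn hhc hirr hnub ha hb)
    (fun _ hr => exists_nsmul_add_mem_nilCone hn hirr hr)
  obtain ⟨r, hr⟩ := nilCone_nonempty hn hhc hirr hnub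
  exact ⟨φ, hφ, DFunLike.ne_iff.mpr ⟨r, ((hφ r).mp hr).ne'⟩⟩

namespace IsHeight

variable {φ : (Fin n → ℤ) →+ ℝ}

lemma nonneg_of_mem_annDegrees (hφ : ρ.IsHeight φ) (hn : 2 ≤ n) (hirr : ρ.IsIrreducible)
    {α : Fin n → ℤ} {v : V} (hv : v ≠ 0) (hα : α ∈ ρ.annDegrees v) : 0 ≤ φ α := by
  by_contra! hneg
  have hmem : -α ∈ ρ.nilCone := (hφ _).mpr (by simpa using hneg)
  have h0 := add_mem_nilCone_of_mem_annDegrees hn hirr hmem hv hα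
  rw [neg_add_cancel, hφ, map_zero] at h0
  exact h0.false

lemma grade_sub_ne_bot (hφ : ρ.IsHeight φ) (hn : 2 ≤ n) (hirr : ρ.IsIrreducible)
    {m r : Fin n → ℤ} (hm : ρ.grade lam c m ≠ ⊥) (hr : 0 < φ r) : ρ.grade lam c (m - r) ≠ ⊥ := by
  rw [sub_eq_add_neg]
  refine grade_add_ne_bot hm fun v hv h => ?_
  have := hφ.nonneg_of_mem_annDegrees hn hirr hv h
  rw [map_neg] at this
  linarith

lemma exists_forall_le_of_grade_ne_bot (hφ : ρ.IsHeight φ) (hφ0 : φ ≠ 0) (hn : 2 ≤ n)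
    (hhc : ρ.HarishChandra) (hirr : ρ.IsIrreducible) :
    ∃ B, ∀ m, ρ.grade lam c m ≠ ⊥ → φ m ≤ B := by
  obtain ⟨r, hr⟩ : ∃ r, 0 < φ r := by
    obtain ⟨r, hr⟩ := DFunLike.ne_iff.mp hφ0
    rcases lt_or_gt_of_ne hr with h | h
    exacts [⟨-r, by simpa using h⟩, ⟨r, h⟩]
  have hr0 : r ≠ 0 := fun h => by simp [h] at hr
  obtain ⟨k, hk⟩ := (eventually_grade_add_nsmul_eq_bot hhc hr0 ((hφ r).mpr hr) 0).exists
  refine ⟨φ (k • r), fun m hm => ?_⟩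
  by_contra! hlt
  have := hφ.grade_sub_ne_bot (r := m - k • r) hn hirr hm (by rw [map_sub]; linarith)
  rw [sub_sub_cancel, ← zero_add (k • r)] at this
  exact this hk

end IsHeight

end Height

section RaiseLower

lemma act_act_fst {r s t : Fin n → ℤ} {u v w : Fin n → ℂ} {b : ℂ} (ht : r + s = t)
    (hw : (u ⬝ᵥ toWeight s) • v - (v ⬝ᵥ toWeight r) • u = b • w) (x : V) :
    ρ.act r (u, 0) (ρ.act s (v, 0) x) =
      ρ.act s (v, 0) (ρ.act r (u, 0) x) + b • ρ.act t (w, 0) x := by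
  have hpair : (u ⬝ᵥ toWeight s) • (v, (0 : S)) - (v ⬝ᵥ toWeight r) • (u, (0 : S)) = b • (w, 0) :=
    Prod.ext hw (by simp)
  rw [act_act, ht, hpair, map_smul, LinearMap.smul_apply]

variable (ρ) in
/-- The operator `D(u, k ε) D(w, γ - k ε)` of degree `γ`, which brings the vectors produced by
`ExtWittRep.lower` back to the original degree. -/
def raise (u w : Fin n → ℂ) (ε γ : Fin n → ℤ) (k : ℕ) : Module.End ℂ V :=
  ρ.act (k • ε) (u, 0) ∘ₗ ρ.act (γ - k • ε) (w, 0)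

variable (ρ) in
/-- The operator `D(u, -i ε) D(w, -γ + i ε)` of degree `-γ`, which produces a family of vectors of
the same degree, indexed by `i`. -/
def lower (u w : Fin n → ℂ) (ε γ : Fin n → ℤ) (i : ℕ) : Module.End ℂ V :=
  ρ.act (-(i • ε)) (u, 0) ∘ₗ ρ.act (-γ + i • ε) (w, 0)

lemma lower_mem_grade {m : Fin n → ℤ} {v : V} (hv : v ∈ ρ.grade lam c m) {u w : Fin n → ℂ}
    {ε γ : Fin n → ℤ} (i : ℕ) : ρ.lower u w ε γ i v ∈ ρ.grade lam c (m - γ) := by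
  have hdeg : m + (-γ + i • ε) + -(i • ε) = m - γ := by abel
  exact hdeg ▸ act_mem_grade (act_mem_grade hv _ (w, 0)) _ (u, 0)

lemma raise_lower {u w : Fin n → ℂ} {ε γ : Fin n → ℤ} {v : V} {b : ℂ} (i k : ℕ)
    (hwε : w ⬝ᵥ toWeight ε = 0) (hb : ρ.act 0 (w, 0) v = b • v) (hk : k • ε ∈ ρ.annDegrees v)
    (hγk : γ - k • ε ∈ ρ.annDegrees v) (hγki : γ - (k + i) • ε ∈ ρ.annDegrees v) :
    ρ.raise u w ε γ k (ρ.lower u w ε γ i v) =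
      (-2 * k * u ⬝ᵥ toWeight (γ - k • ε) * w ⬝ᵥ toWeight γ * u ⬝ᵥ toWeight ε * b) • v +
        (-2 * w ⬝ᵥ toWeight γ) • ρ.act (k • ε) (u, 0)
          (ρ.act (-(i • ε)) (u, 0) (ρ.act (i • ε - k • ε) (w, 0) v)) := by
  have hwnsmul : ∀ k : ℕ, w ⬝ᵥ toWeight (k • ε) = 0 := fun k => by
    rw [map_nsmul, dotProduct_smul, hwε, smul_zero]
  have hswap (y : V) : ρ.act (γ - k • ε) (w, 0) (ρ.act (-(i • ε)) (u, 0) y) =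
      ρ.act (-(i • ε)) (u, 0) (ρ.act (γ - k • ε) (w, 0) y) +
        (-(u ⬝ᵥ toWeight (γ - k • ε))) • ρ.act (γ - (k + i) • ε) (w, 0) y :=
    act_act_fst (by rw [add_nsmul]; abel)
      (by rw [map_neg, dotProduct_neg, hwnsmul, neg_zero, zero_smul, zero_sub, neg_smul]) y
  have hww {r s t : Fin n → ℤ} (ht : r + s = t) (hr : r ∈ ρ.annDegrees v)
      (hs : w ⬝ᵥ toWeight s - w ⬝ᵥ toWeight r = -2 * w ⬝ᵥ toWeight γ) :
      ρ.act r (w, 0) (ρ.act s (w, 0) v) = (-2 * w ⬝ᵥ toWeight γ) • ρ.act t (w, 0) v := by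
    rw [act_act_fst ht (by rw [← sub_smul, hs]), hr, map_zero, zero_add]
  have hlower₁ : ρ.act (γ - k • ε) (w, 0) (ρ.act (-γ + i • ε) (w, 0) v) =
      (-2 * w ⬝ᵥ toWeight γ) • ρ.act (i • ε - k • ε) (w, 0) v := by
    refine hww (by abel) hγk ?_
    rw [map_add, map_sub, map_neg, dotProduct_add, dotProduct_sub, dotProduct_neg, hwnsmul, hwnsmul]
    ring
  have hlower₂ : ρ.act (γ - (k + i) • ε) (w, 0) (ρ.act (-γ + i • ε) (w, 0) v) =
      (-2 * w ⬝ᵥ toWeight γ) • ρ.act (-(k • ε)) (w, 0) v := by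
    refine hww (by rw [add_nsmul]; abel) hγki ?_
    rw [map_add, map_sub, map_neg, dotProduct_add, dotProduct_sub, dotProduct_neg, hwnsmul, hwnsmul]
    ring
  have hreturn : ρ.act (k • ε) (u, 0) (ρ.act (-(k • ε)) (w, 0) v) =
      (-(k * u ⬝ᵥ toWeight ε)) • b • v := by
    rw [act_act_fst (add_neg_cancel _) (b := -(k * u ⬝ᵥ toWeight ε)) (w := w)
      (by rw [map_neg, dotProduct_neg, hwnsmul, zero_smul, sub_zero, map_nsmul, dotProduct_smul,
        nsmul_eq_mul]), hk, map_zero, zero_add, hb]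
  rw [raise, lower, LinearMap.comp_apply, LinearMap.comp_apply, hswap, hlower₁, hlower₂,
    map_add, map_smul, map_smul, map_smul, map_smul, hreturn]
  module

lemma act_nsmul_act_neg_nsmul {u : Fin n → ℂ} {ε : Fin n → ℤ} {v : V} (k : ℕ)
    (hk : k • ε ∈ ρ.annDegrees v) : ρ.act (k • ε) (u, 0) (ρ.act (-(k • ε)) (u, 0) v) =
      (-2 * k * u ⬝ᵥ toWeight ε) • ρ.act 0 (u, 0) v := by
  rw [act_act_fst (add_neg_cancel _) (b := -2 * k * u ⬝ᵥ toWeight ε) (w := u), hk, map_zero,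
    zero_add]
  rw [← sub_smul, map_neg, dotProduct_neg, map_nsmul, dotProduct_smul, nsmul_eq_mul]
  congr 1
  ring

/-- The vectors `lower i v` of degree `m - γ` are almost independent: up to a correction by
multiples of `v`, the operators `raise k` are triangular on them. -/
lemma le_finrank_grade_add_one {m γ ε : Fin n → ℤ} [FiniteDimensional ℂ (ρ.grade lam c (m - γ))]
    {v : V} (hv : v ∈ ρ.grade lam c m) (hv0 : v ≠ 0) {u w : Fin n → ℂ}
    (hwε : w ⬝ᵥ toWeight ε = 0) (hwγ : w ⬝ᵥ toWeight γ ≠ 0)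
    (hwm : w ⬝ᵥ (lam + toWeight m) ≠ 0) (huε : u ⬝ᵥ toWeight ε ≠ 0)
    (hum : u ⬝ᵥ (lam + toWeight m) ≠ 0) (hε : ∀ j : ℕ, 0 < j → j • ε ∈ ρ.annDegrees v)
    {N : ℕ} (hγ : ∀ j ≤ 2 * N, γ - j • ε ∈ ρ.annDegrees v) :
    N ≤ Module.finrank ℂ (ρ.grade lam c (m - γ)) + 1 := by
  have hweight (x : Fin n → ℂ) : ρ.act 0 (x, 0) v = (x ⬝ᵥ (lam + toWeight m)) • v := by
    simpa using mem_grade_iff.mp hv (x, 0)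
  let x (i : Fin N) : V := ρ.lower u w ε γ (i + 1) v
  let t (k : ℕ) : ℂ := -2 * k * u ⬝ᵥ toWeight (γ - k • ε) * w ⬝ᵥ toWeight γ * u ⬝ᵥ toWeight ε *
    w ⬝ᵥ (lam + toWeight m)
  have hx (i : Fin N) : x i ∈ ρ.grade lam c (m - γ) := lower_mem_grade hv _
  have hraise (i k : Fin N) : ρ.raise u w ε γ (k + 1) (x i) = t (k + 1) • v +
      (-2 * w ⬝ᵥ toWeight γ) • ρ.act ((k + 1 : ℕ) • ε) (u, 0) (ρ.act (-((i + 1 : ℕ) • ε)) (u, 0)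
        (ρ.act ((i + 1 : ℕ) • ε - (k + 1 : ℕ) • ε) (w, 0) v)) :=
    raise_lower (i + 1) (k + 1) hwε (hweight w) (hε _ k.val.succ_pos) (hγ _ (by lia))
      (hγ _ (by lia))
  let f (k : Fin N) : ρ.grade lam c (m - γ) × ℂ →ₗ[ℂ] V :=
    (ρ.raise u w ε γ (k + 1) ∘ₗ Submodule.subtype _).coprod
      (LinearMap.toSpanSingleton ℂ V (-t (k + 1) • v))
  have hind : LinearIndependent ℂ
      fun i : Fin N => ((⟨x i, hx i⟩, 1) : ρ.grade lam c (m - γ) × ℂ) := by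
    have hf (i k : Fin N) : f k (⟨x i, hx i⟩, 1) =
        (-2 * w ⬝ᵥ toWeight γ) • ρ.act ((k + 1 : ℕ) • ε) (u, 0)
          (ρ.act (-((i + 1 : ℕ) • ε)) (u, 0)
            (ρ.act ((i + 1 : ℕ) • ε - (k + 1 : ℕ) • ε) (w, 0) v)) := by
      rw [LinearMap.coprod_apply, LinearMap.comp_apply, Submodule.subtype_apply, hraise,
        LinearMap.toSpanSingleton_apply, one_smul, neg_smul, add_neg_cancel_comm]
    refine linearIndependent_of_triangular f (fun k i hki => ?_) fun k => ?_
    · have hdiff : (i + 1 : ℕ) • ε - (k + 1 : ℕ) • ε = (i - k : ℕ) • ε := by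
        rw [sub_eq_iff_eq_add, ← add_nsmul, ← add_assoc, Nat.sub_add_cancel hki.le]
      rw [hf, hdiff, hε _ (Nat.sub_pos_of_lt hki), map_zero, map_zero, smul_zero]
    · rw [hf, sub_self, hweight, map_smul, map_smul,
        act_nsmul_act_neg_nsmul _ (hε _ k.val.succ_pos), hweight]
      exact smul_ne_zero (mul_ne_zero (by norm_num) hwγ) <| smul_ne_zero hwm <|
        smul_ne_zero (mul_ne_zero (mul_ne_zero (by norm_num)
          (Nat.cast_ne_zero.mpr k.val.succ_ne_zero)) huε) (smul_ne_zero hum hv0)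
  simpa using hind.fintype_card_le_finrank

end RaiseLower

section Discreteness

lemma exists_grade_ne_bot_weight_ne_zero {φ : (Fin n → ℤ) →+ ℝ} (hφ : ρ.IsHeight φ) (hn : 2 ≤ n)
    (hirr : ρ.IsIrreducible) (h0 : ρ.grade lam c 0 ≠ ⊥) {δ : Fin n → ℤ} (hδ : 0 < φ δ) :
    ∃ m, ρ.grade lam c m ≠ ⊥ ∧ lam + toWeight m ≠ 0 := by
  rcases eq_or_ne lam 0 with rfl | hlam
  · have hδ0 : δ ≠ 0 := fun h => by simp [h] at hδ
    refine ⟨0 - δ, hφ.grade_sub_ne_bot hn hirr h0 hδ, ?_⟩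
    rw [zero_add, zero_sub]
    exact (map_ne_zero_iff _ toWeight_injective).mpr (neg_ne_zero.mpr hδ0)
  · exact ⟨0, h0, by simpa using hlam⟩

namespace IsHeight

variable {φ : (Fin n → ℤ) →+ ℝ}

lemma exists_mem_grade_add_nsmul (hφ : ρ.IsHeight φ) (hn : 2 ≤ n) (hhc : ρ.HarishChandra)
    (hirr : ρ.IsIrreducible) {m ε : Fin n → ℤ} (hm : ρ.grade lam c m ≠ ⊥) (hε : 0 < φ ε) :
    ∃ k : ℕ, ∃ v ∈ ρ.grade lam c (m + k • ε), v ≠ 0 ∧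
      ∀ b, b = ε ∨ φ ε < φ b → b ∈ ρ.annDegrees v := by
  have hε0 : ε ≠ 0 := fun h => by simp [h] at hε
  obtain ⟨k, hk, hk'⟩ := Nat.exists_not_and_succ_of_not_zero_of_exists
    (p := fun k => ρ.grade lam c (m + k • ε) = ⊥) (by simpa using hm)
    (eventually_grade_add_nsmul_eq_bot hhc hε0 ((hφ ε).mpr hε) m).exists
  obtain ⟨v, hv, hv0⟩ := Submodule.exists_mem_ne_zero_of_ne_bot hk
  refine ⟨k, v, hv, hv0, fun b hb => mem_annDegrees_of_grade_add_eq_bot hv ?_⟩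
  rw [succ_nsmul, ← add_assoc] at hk'
  rcases hb with rfl | hb
  · exact hk'
  · by_contra hne
    refine hφ.grade_sub_ne_bot hn hirr hne (r := b - ε) (by rwa [map_sub, sub_pos]) ?_
    rwa [show m + k • ε + b - (b - ε) = m + k • ε + ε by abel]

lemma le_finrank_grade_sub_add_one (hφ : ρ.IsHeight φ) (hn : 2 ≤ n) (hhc : ρ.HarishChandra)
    (hirr : ρ.IsIrreducible) {m δ ε : Fin n → ℤ} (hm : ρ.grade lam c m ≠ ⊥) (hε : 0 < φ ε)
    {w : Fin n → ℂ} (hwε : w ⬝ᵥ toWeight ε = 0) (hwm : w ⬝ᵥ (lam + toWeight m) ≠ 0)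
    (hwδ : w ⬝ᵥ toWeight δ ≠ 0) {N : ℕ} (hN : φ ε * (2 * N + 1) < φ δ) :
    N ≤ Module.finrank ℂ (ρ.grade lam c (m - δ)) + 1 := by
  obtain ⟨k, v, hv, hv0, hann⟩ := hφ.exists_mem_grade_add_nsmul hn hhc hirr hm hε
  have hwnsmul : w ⬝ᵥ toWeight (k • ε) = 0 := by rw [map_nsmul, dotProduct_smul, hwε, smul_zero]
  have hwmk : w ⬝ᵥ (lam + toWeight (m + k • ε)) ≠ 0 := by
    rwa [map_add, ← add_assoc, dotProduct_add, hwnsmul, add_zero]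
  have hwδk : w ⬝ᵥ toWeight (δ + k • ε) ≠ 0 := by
    rwa [map_add, dotProduct_add, hwnsmul, add_zero]
  obtain ⟨u, hu⟩ := exists_forall_dotProduct_ne_zero
    (η := ![toWeight ε, lam + toWeight (m + k • ε)]) <| Fin.forall_fin_two.mpr
      ⟨fun h => by simp [(map_eq_zero_iff _ toWeight_injective).mp h] at hε,
        fun h => hwmk ((congrArg (w ⬝ᵥ ·) h).trans (dotProduct_zero w))⟩
  have hεann (j : ℕ) (hj : 0 < j) : j • ε ∈ ρ.annDegrees v := by
    refine hann _ ((Nat.succ_le_iff.mpr hj).eq_or_lt.imp (fun h => by simp [← h]) fun h => ?_)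
    rw [map_nsmul, nsmul_eq_mul]
    exact lt_mul_left hε (by exact_mod_cast h)
  have hδann (j : ℕ) (hj : j ≤ 2 * N) : δ + k • ε - j • ε ∈ ρ.annDegrees v := by
    refine hann _ (Or.inr ?_)
    have hjN : (j : ℝ) ≤ 2 * N := by exact_mod_cast hj
    rw [map_sub, map_add, map_nsmul, map_nsmul, nsmul_eq_mul, nsmul_eq_mul]
    nlinarith [mul_nonneg k.cast_nonneg hε.le]
  have hfin : FiniteDimensional ℂ (ρ.grade lam c (m + k • ε - (δ + k • ε))) := hhc.2 _ _
  rw [← add_sub_add_right_eq_sub m δ (k • ε)]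
  exact le_finrank_grade_add_one hv hv0 hwε hwδk hwmk (hu 0) (hu 1) hεann hδann

lemma not_forall_exists_lt (hφ : ρ.IsHeight φ) (hn : 2 ≤ n) (hhc : ρ.HarishChandra)
    (hirr : ρ.IsIrreducible) : ¬∀ t > 0, ∃ e, 0 < φ e ∧ φ e < t := by
  intro hdense
  obtain ⟨lam, c, h0⟩ := exists_grade_zero_ne_bot hhc.1 hirr
  obtain ⟨δ, hδ, -⟩ := hdense 1 one_pos
  obtain ⟨m, hm, hη⟩ := exists_grade_ne_bot_weight_ne_zero hφ hn hirr h0 hδ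
  have hδ0 : toWeight δ ≠ 0 := fun h => by simp [(map_eq_zero_iff _ toWeight_injective).mp h] at hδ
  let N := Module.finrank ℂ (ρ.grade lam c (m - δ)) + 2
  obtain ⟨t, ht, hsmall⟩ := (nhdsGT_basis 0).eventually_iff.mp <|
    (eventually_exists_dotProduct_eq_zero φ (η := ![lam + toWeight m, toWeight δ])
      (Fin.forall_fin_two.mpr ⟨hη, hδ0⟩)).and
      (Ioo_mem_nhdsGT (show 0 < φ δ / (2 * N + 1) by positivity))
  obtain ⟨ε, hε, hεt⟩ := hdense t ht
  obtain ⟨hw, -, hεδ⟩ := hsmall ⟨hε, hεt⟩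
  obtain ⟨w, hwε, hw⟩ := hw ε rfl
  have := hφ.le_finrank_grade_sub_add_one hn hhc hirr hm hε hwε (hw 0) (hw 1)
    ((lt_div_iff₀ (by positivity)).mp hεδ)
  lia

end IsHeight

end Discreteness

section TopLayer

lemma mem_hwSpace {K : AddSubgroup (Fin n → ℤ)} {z : V} : z ∈ ρ.hwSpace K z :=
  Submodule.mem_sInf.mpr fun _ hU => hU.1

lemma invariantK_hwSpace {K : AddSubgroup (Fin n → ℤ)} {z : V} :
    ρ.InvariantK K (ρ.hwSpace K z) :=
  invariantK_iff.mpr fun r hr x _ hv => Submodule.mem_sInf.mpr fun U hU =>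
    invariantK_iff.mp hU.2 r hr x _ (Submodule.mem_sInf.mp hv U hU)

/-- Replaces the decomposition `U(𝔏⁻) U(𝔏₀) U(𝔏⁺)`: the span of `U` under the operators with degree
outside `O` is stable under those with degree in `O`, since commuting one of the latter to the right
past the former only produces operators of either kind. -/
lemma eq_top_of_act_mem (hirr : ρ.IsIrreducible) {O : Set (Fin n → ℤ)} {U W : Submodule ℂ V}
    (hU : U ≠ ⊥) (hO : ∀ r ∈ O, ∀ x, ∀ v ∈ U, ρ.act r x v = 0) (hUW : U ≤ W)
    (hW : ∀ r ∉ O, ∀ x, ∀ v ∈ W, ρ.act r x v ∈ W) : W = ⊤ := by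
  let L : Submodule ℂ V := sInf {X | U ≤ X ∧ ∀ r ∉ O, ∀ x, ∀ v ∈ X, ρ.act r x v ∈ X}
  have hUL : U ≤ L := le_sInf fun X hX => hX.1
  have hL : ∀ r ∉ O, ∀ x, ∀ v ∈ L, ρ.act r x v ∈ L := fun r hr x v hv =>
    Submodule.mem_sInf.mpr fun X hX => hX.2 r hr x v (Submodule.mem_sInf.mp hv X hX)
  let L' : Submodule ℂ V := L ⊓ ⨅ r ∈ O, ⨅ x, L.comap (ρ.act r x)
  have mem_L' {v : V} : v ∈ L' ↔ v ∈ L ∧ ∀ r ∈ O, ∀ x, ρ.act r x v ∈ L := by simp [L']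
  have hLL' : L ≤ L' := by
    refine sInf_le ⟨fun v hv => ?_, fun r hr x v hv => ?_⟩
    · exact mem_L'.mpr ⟨hUL hv, fun r hr x => hO r hr x v hv ▸ zero_mem L⟩
    · rw [mem_L'] at hv ⊢
      refine ⟨hL r hr x v hv.1, fun s hs y => ?_⟩
      rw [act_act]
      refine add_mem (hL r hr x _ (hv.2 s hs y)) ?_
      by_cases hsr : s + r ∈ O
      · exact hv.2 _ hsr _
      · exact hL _ hsr _ v hv.1
  have hinv : ρ.Invariant L := invariant_iff.mpr fun r x v hv => by
    by_cases hr : r ∈ O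
    · exact (mem_L'.mp (hLL' hv)).2 r hr x
    · exact hL r hr x v hv
  have htop : L = ⊤ := (hirr.2 L hinv).resolve_left (ne_bot_of_le_ne_bot hU hUL)
  exact top_le_iff.mp (htop ▸ sInf_le ⟨hUW, hW⟩)

variable {φ : (Fin n → ℤ) →+ ℝ} {t : ℝ}

lemma grade_add_eq_bot_of_pos (hmax : ∀ m, ρ.grade lam c m ≠ ⊥ → φ m ≤ t) {m r : Fin n → ℤ}
    (hm : φ m = t) (hr : 0 < φ r) : ρ.grade lam c (m + r) = ⊥ := by
  by_contra h
  have hle := hmax _ h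
  rw [map_add, hm] at hle
  exact hle.not_gt (lt_add_of_pos_right t hr)

lemma eq_iSup_grade_of_invariantK_ker (hirr : ρ.IsIrreducible)
    (hmax : ∀ m, ρ.grade lam c m ≠ ⊥ → φ m ≤ t) {U : Submodule ℂ V} (hU0 : U ≠ ⊥)
    (hUT : U ≤ ⨆ m ∈ {m | φ m = t}, ρ.grade lam c m) (hU : ρ.InvariantK φ.ker U) :
    U = ⨆ m ∈ {m | φ m = t}, ρ.grade lam c m := by
  let T : Submodule ℂ V := ⨆ m ∈ {m | φ m = t}, ρ.grade lam c m
  let Low : Submodule ℂ V := ⨆ m ∈ {m | φ m < t}, ρ.grade lam c m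
  have hdisj : Disjoint T Low := iSupIndep_grade.disjoint_biSup_biSup <|
    Set.disjoint_left.mpr fun m hm hm' => hm'.ne hm
  have mem_Low {m v} (hm : φ m < t) (hv : v ∈ ρ.grade lam c m) : v ∈ Low :=
    le_biSup (ρ.grade lam c) hm hv
  have hpos : ∀ r ∈ {r | 0 < φ r}, ∀ x, ∀ v ∈ U, ρ.act r x v = 0 := fun r hr x v hv => by
    refine (Submodule.mem_bot ℂ).mp (act_mem_of_mem_iSup_grade (fun m hm w hw => ?_) (hUT hv))
    exact mem_annDegrees_of_grade_add_eq_bot hw (grade_add_eq_bot_of_pos hmax hm hr) x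
  have htop : U ⊔ Low = ⊤ := by
    refine eq_top_of_act_mem hirr hU0 hpos le_sup_left fun r hr x v hv => ?_
    rw [Set.mem_ofPred_eq, not_lt] at hr
    obtain ⟨y, hy, l, hl, rfl⟩ := Submodule.mem_sup.mp hv
    rw [map_add]
    refine add_mem ?_ (Submodule.mem_sup_right <| act_mem_of_mem_iSup_grade (fun m hm w hw =>
      mem_Low ?_ (act_mem_grade hw r x)) hl)
    · rcases hr.eq_or_lt with hr | hr
      · exact Submodule.mem_sup_left (invariantK_iff.mp hU r hr x y hy)
      · refine Submodule.mem_sup_right <| act_mem_of_mem_iSup_grade (fun m hm w hw =>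
          mem_Low ?_ (act_mem_grade hw r x)) (hUT hy)
        rw [map_add, show φ m = t from hm]
        exact add_lt_of_neg_right t hr
    · rw [map_add]
      exact add_lt_of_lt_of_nonpos hm hr
  refine hUT.antisymm ?_
  calc T = (U ⊔ Low) ⊓ T := by rw [htop, top_inf_eq]
    _ = U ⊔ Low ⊓ T := (sup_inf_assoc_of_le Low hUT)
    _ ≤ U := by rw [hdisj.symm.eq_bot, sup_bot_eq]

lemma hwSpace_ker_eq_iSup_grade (hirr : ρ.IsIrreducible)
    (hmax : ∀ m, ρ.grade lam c m ≠ ⊥ → φ m ≤ t) {m₀ : Fin n → ℤ} (hm₀ : φ m₀ = t) {z : V}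
    (hz : z ∈ ρ.grade lam c m₀) (hz0 : z ≠ 0) :
    ρ.hwSpace φ.ker z = ⨆ m ∈ {m | φ m = t}, ρ.grade lam c m := by
  refine eq_iSup_grade_of_invariantK_ker hirr hmax
    ((Submodule.ne_bot_iff _).mpr ⟨z, mem_hwSpace, hz0⟩) ?_ invariantK_hwSpace
  refine sInf_le ⟨le_biSup (ρ.grade lam c) hm₀ hz, invariantK_iff.mpr fun r hr x v hv => ?_⟩
  refine act_mem_of_mem_iSup_grade (fun m hm w hw => ?_) hv
  refine le_biSup (ρ.grade lam c) ?_ (act_mem_grade hw r x)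
  rw [Set.mem_ofPred_eq, map_add, AddMonoidHom.mem_ker.mp hr, add_zero]
  exact hm

lemma isHWVector_ker (hirr : ρ.IsIrreducible) {m₀ β : Fin n → ℤ} (hβ : 0 < φ β)
    (hmax : ∀ m, ρ.grade lam c m ≠ ⊥ → φ m ≤ φ m₀) {z : V} (hz : z ∈ ρ.grade lam c m₀)
    (hz0 : z ≠ 0) : ρ.IsHWVector φ.ker β z := by
  have hann (r) (hr : posDeg φ.ker β r) : r ∈ ρ.annDegrees z :=
    mem_annDegrees_of_grade_add_eq_bot hz
      (grade_add_eq_bot_of_pos hmax rfl (pos_of_posDeg_ker hβ hr))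
  refine ⟨hz0, ⟨_, c, hz⟩, fun u r b hr => ?_, fun s r b hr => ?_, fun U hU hzU => ?_⟩
  · rw [D_eq_act]
    exact hann r hr _
  · rw [E_eq_act]
    exact hann r hr _
  · exact (hirr.2 U hU).resolve_left ((Submodule.ne_bot_iff _).mpr ⟨z, hzU, hz0⟩)

end TopLayer

lemma IsHeight.exists_forall_le_of_forall_eq_zsmul {φ : (Fin n → ℤ) →+ ℝ} (hφ : ρ.IsHeight φ)
    (hn : 2 ≤ n) (hhc : ρ.HarishChandra) (hirr : ρ.IsIrreducible) {β : Fin n → ℤ} (hβ : 0 < φ β)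
    (h : ∀ m, ∃ d : ℤ, φ m = d • φ β) (h0 : ρ.grade lam c 0 ≠ ⊥) :
    ∃ m₀, ρ.grade lam c m₀ ≠ ⊥ ∧ ∀ m, ρ.grade lam c m ≠ ⊥ → φ m ≤ φ m₀ := by
  have hφ0 : φ ≠ 0 := fun h => by simp [h] at hβ
  obtain ⟨B, hB⟩ := hφ.exists_forall_le_of_grade_ne_bot (lam := lam) (c := c) hφ0 hn hhc hirr
  obtain ⟨d₀, ⟨m₀, hm₀, hd₀⟩, hmax⟩ := Int.exists_greatest_of_bdd
    (P := fun d => ∃ m, ρ.grade lam c m ≠ ⊥ ∧ φ m = d • φ β)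
    ⟨⌊B / φ β⌋, fun d ⟨m, hm, hd⟩ => by
      rw [Int.le_floor, le_div_iff₀ hβ, ← zsmul_eq_mul, ← hd]
      exact hB m hm⟩
    ⟨0, 0, h0, by simp⟩
  refine ⟨m₀, hm₀, fun m hm => ?_⟩
  obtain ⟨d, hd⟩ := h m
  rw [hd, hd₀]
  exact zsmul_le_zsmul_left hβ.le (hmax d ⟨m, hm, hd⟩)

end ExtWittRep

end LoopWitt

/-- For `n ≥ 2`, an irreducible weight `𝔏_{S,n}`-module with finite
dimensional but not uniformly bounded weight spaces is isomorphic to `L(Y, β, M)`: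
it is a highest weight module for a triangular decomposition `ℤⁿ = M ⊕ ℤβ`, whose
highest weight space `Y` (the `(𝔏_{S,n})_M`-submodule generated by the highest weight
vector) is an irreducible `(𝔏_{S,n})_M`-module. -/
theorem stmt9 {n : ℕ} (hn : 2 ≤ n) {S V : Type*}
    [AddCommGroup S] [Module ℂ S] [FiniteDimensional ℂ S]
    [AddCommGroup V] [Module ℂ V]
    (ρ : ExtWittRep n S ℂ V)
    (hhc : ρ.HarishChandra) (hirr : ρ.IsIrreducible) (hnub : ¬ ρ.UniformlyBounded) :
    ∃ (β : Fin n → ℤ) (M : AddSubgroup (Fin n → ℤ)),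
      IsDirectSumDecomp M β ∧
      ∃ z : V, ρ.IsHWVector M β z ∧
        -- the highest weight space `Y` is an irreducible `(𝔏_{S,n})_M`-module
        ρ.hwSpace M z ≠ ⊥ ∧
        ∀ U : Submodule ℂ V, U ≤ ρ.hwSpace M z → ρ.InvariantK M U →
          U = ⊥ ∨ U = ρ.hwSpace M z := by
  obtain ⟨φ, hφ, hφ0⟩ := ExtWittRep.exists_isHeight_ne_zero hn hhc hirr hnub
  obtain ⟨β, hβ, hφβ⟩ := (exists_forall_eq_zsmul_or_forall_exists_lt hφ0).resolve_right
    (hφ.not_forall_exists_lt hn hhc hirr)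
  obtain ⟨lam, c, h0⟩ := ExtWittRep.exists_grade_zero_ne_bot hhc.1 hirr
  obtain ⟨m₀, hm₀, hmax⟩ := hφ.exists_forall_le_of_forall_eq_zsmul hn hhc hirr hβ hφβ h0
  obtain ⟨z, hz, hz0⟩ := Submodule.exists_mem_ne_zero_of_ne_bot hm₀
  refine ⟨β, φ.ker, isDirectSumDecomp_ker hβ hφβ, z,
    ExtWittRep.isHWVector_ker hirr hβ hmax hz hz0,
    (Submodule.ne_bot_iff _).mpr ⟨z, ExtWittRep.mem_hwSpace, hz0⟩,
    fun U hU hinv => or_iff_not_imp_left.mpr fun hU0 => ?_⟩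
  rw [ExtWittRep.hwSpace_ker_eq_iSup_grade hirr hmax rfl hz hz0] at hU ⊢
  exact ExtWittRep.eq_iSup_grade_of_invariantK_ker hirr hmax hU0 hU hinv
end
end
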